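/- arXiv:1902.10177 — 6 statements merged into one kernel-verified Lean document; each statement's English description precedes it below -/
import Mathlib

section
/- The optimal coherence of eight lines satisfies 0.6 ≤ μ₈ ≤ 0.647588979. -/
open scoped RealInnerProductSpace

noncomputable section

/-- Euclidean 3-space. -/
abbrev E3 := EuclideanSpace ℝ (Fin 3)

/-- The coherence of a finite set of vectors: the largest absolute inner product
between distinct elements. -/
def coherence (Φ : Finset E3) : ℝ :=
  sSup {r : ℝ | ∃ x ∈ Φ, ∃ y ∈ Φ, x ≠ y ∧ r = |⟪x, y⟫|}

/-- `muOpt n` is the infimum of the coherence over all sets of `n` unit vectors in ℝ³. -/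
def muOpt (n : ℕ) : ℝ :=
  sInf {r : ℝ | ∃ Φ : Finset E3, Φ.card = n ∧ (∀ x ∈ Φ, ‖x‖ = 1) ∧ r = coherence Φ}

/-!
Lower bound. The quadratic and quartic zonal harmonics are positive definite kernels on the sphere
of `ℝᵈ`: `t² - 1/d` and `t⁴ - 6t²/(d+4) + 3/((d+2)(d+4))`, evaluated at `t = ⟪x, y⟫`, are the inner
products of the traceless parts of `x⊗x, y⊗y` and of `x⊗x⊗x⊗x, y⊗y⊗y⊗y`. Delsarte's linear
programming argument with the polynomial `t² (t² - μ²)`, which is nonpositive for `|t| ≤ μ`, then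
yields Levenshtein's bound `3N - d(d+2) ≤ (d+2)(N-d) μ²` for `N ≥ d` unit vectors with coherence at
most `μ`; for `d = 3` and `N = 8` it says `μ ≥ 3/5`.

Upper bound. Eight explicit integer vectors span lines whose coherence is compared with the claimed
constant in integer arithmetic, after clearing the norms by squaring.
-/

open Finset

section HarmonicTensors

variable {ι : Type*} [Fintype ι]

lemma inner_eq_sum_mul (x y : EuclideanSpace ℝ ι) : ⟪x, y⟫ = ∑ i, x i * y i := by
  simp [PiLp.inner_apply, mul_comm]

lemma sum_sum_nonneg_of_eq_sum_mul {α : Type*} (Φ : Finset α) {K : α → α → ℝ} (f : ι → α → ℝ)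
    (hK : ∀ x y, K x y = ∑ i, f i x * f i y) : 0 ≤ ∑ x ∈ Φ, ∑ y ∈ Φ, K x y :=
  calc
    0 ≤ ∑ i, (∑ x ∈ Φ, f i x) ^ 2 := sum_nonneg fun i _ => sq_nonneg _
    _ = ∑ i, ∑ x ∈ Φ, ∑ y ∈ Φ, f i x * f i y := by simp only [sq, sum_mul_sum]
    _ = ∑ x ∈ Φ, ∑ y ∈ Φ, K x y := by
      simp only [hK]
      rw [sum_comm]
      exact sum_congr rfl fun x _ => sum_comm

/-- Symmetric four-index tensors. The transpositions of adjacent indices generate all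
permutations, so only these are required to preserve the tensor. -/
structure IsSymmTensor₄ (A : ι → ι → ι → ι → ℝ) : Prop where
  swap₁₂ : ∀ i j k l, A j i k l = A i j k l
  swap₂₃ : ∀ i j k l, A i k j l = A i j k l
  swap₃₄ : ∀ i j k l, A i j l k = A i j k l

variable {A : ι → ι → ι → ι → ℝ}

namespace IsSymmTensor₄

lemma sum_mul_swap₁₂ (hA : IsSymmTensor₄ A) (B : ι → ι → ι → ι → ℝ) :
    ∑ i, ∑ j, ∑ k, ∑ l, A i j k l * B i j k l = ∑ i, ∑ j, ∑ k, ∑ l, A i j k l * B j i k l := by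
  rw [sum_comm]
  simp only [hA.swap₁₂]

lemma sum_mul_swap₂₃ (hA : IsSymmTensor₄ A) (B : ι → ι → ι → ι → ℝ) :
    ∑ i, ∑ j, ∑ k, ∑ l, A i j k l * B i j k l = ∑ i, ∑ j, ∑ k, ∑ l, A i j k l * B i k j l := by
  refine sum_congr rfl fun i _ => ?_
  rw [sum_comm]
  simp only [hA.swap₂₃]

lemma sum_mul_swap₃₄ (hA : IsSymmTensor₄ A) (B : ι → ι → ι → ι → ℝ) :
    ∑ i, ∑ j, ∑ k, ∑ l, A i j k l * B i j k l = ∑ i, ∑ j, ∑ k, ∑ l, A i j k l * B i j l k := by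
  refine sum_congr rfl fun i _ => sum_congr rfl fun j _ => ?_
  rw [sum_comm]
  simp only [hA.swap₃₄]

end IsSymmTensor₄

variable [DecidableEq ι]

local notation "δ" => (1 : Matrix ι ι ℝ)

lemma sum_mul_delta₁₂ (A : ι → ι → ι → ι → ℝ) (g : ι → ι → ℝ) :
    ∑ i, ∑ j, ∑ k, ∑ l, A i j k l * (δ i j * g k l) = ∑ k, ∑ l, (∑ i, A i i k l) * g k l :=
  calc
    _ = ∑ i, ∑ k, ∑ l, A i i k l * g k l := by simp [Matrix.one_apply]
    _ = ∑ k, ∑ l, (∑ i, A i i k l) * g k l := by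
      rw [sum_comm]
      refine sum_congr rfl fun k _ => ?_
      rw [sum_comm]
      simp only [sum_mul]

/-- The traceless part of `x ⊗ x`, i.e. the harmonic quadratic form attached to `x`, in
coordinates. In dimension `0` there are no coordinates, so dividing by the dimension is harmless. -/
def harmonicTensor₂ (x : EuclideanSpace ℝ ι) (i j : ι) : ℝ :=
  x i * x j - ‖x‖ ^ 2 / Fintype.card ι * δ i j

/-- The traceless part of `x ⊗ x ⊗ x ⊗ x`, i.e. the harmonic quartic form attached to `x`, in
coordinates. The two coefficients are forced by the vanishing of all contractions. -/
def harmonicTensor₄ (x : EuclideanSpace ℝ ι) (i j k l : ι) : ℝ :=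
  x i * x j * x k * x l
    - ‖x‖ ^ 2 / (Fintype.card ι + 4) *
      (δ i j * (x k * x l) + δ i k * (x j * x l) + δ i l * (x j * x k)
        + δ j k * (x i * x l) + δ j l * (x i * x k) + δ k l * (x i * x j))
    + ‖x‖ ^ 4 / ((Fintype.card ι + 2) * (Fintype.card ι + 4)) *
      (δ i j * δ k l + δ i k * δ j l + δ i l * δ j k)

lemma isSymmTensor₄_harmonicTensor₄ (x : EuclideanSpace ℝ ι) :
    IsSymmTensor₄ (harmonicTensor₄ x) := by
  refine ⟨fun i j k l => ?_, fun i j k l => ?_, fun i j k l => ?_⟩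
  · rw [harmonicTensor₄, harmonicTensor₄, Matrix.isSymm_one.apply j i]
    ring
  · rw [harmonicTensor₄, harmonicTensor₄, Matrix.isSymm_one.apply k j]
    ring
  · rw [harmonicTensor₄, harmonicTensor₄, Matrix.isSymm_one.apply l k]
    ring

lemma sum_harmonicTensor₄_self (x : EuclideanSpace ℝ ι) (k l : ι) :
    ∑ i, harmonicTensor₄ x i i k l = 0 := by
  have norm_sq : ∑ i, x i * x i = ‖x‖ ^ 2 := by
    rw [← inner_eq_sum_mul, real_inner_self_eq_norm_sq]
  have delta_trace : ∑ i, δ i i = Fintype.card ι := by simp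
  have delta_contract (m : ι) (f : ι → ℝ) : ∑ i, δ i m * f i = f m := by simp [Matrix.one_apply]
  simp only [harmonicTensor₄, sum_add_distrib, sum_sub_distrib, ← mul_sum, ← sum_mul,
    delta_contract, delta_trace, norm_sq, Matrix.isSymm_one.apply l k]
  field_simp
  ring

namespace IsSymmTensor₄

lemma sum_mul_delta₁₃ (hA : IsSymmTensor₄ A) (g : ι → ι → ℝ) :
    ∑ i, ∑ j, ∑ k, ∑ l, A i j k l * (δ i k * g j l) = ∑ k, ∑ l, (∑ i, A i i k l) * g k l :=
  (hA.sum_mul_swap₂₃ fun i j k l => δ i k * g j l).trans (sum_mul_delta₁₂ A g)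

lemma sum_mul_delta₁₄ (hA : IsSymmTensor₄ A) (g : ι → ι → ℝ) :
    ∑ i, ∑ j, ∑ k, ∑ l, A i j k l * (δ i l * g j k) = ∑ k, ∑ l, (∑ i, A i i k l) * g k l :=
  (hA.sum_mul_swap₃₄ fun i j k l => δ i l * g j k).trans (hA.sum_mul_delta₁₃ g)

lemma sum_mul_delta₂₃ (hA : IsSymmTensor₄ A) (g : ι → ι → ℝ) :
    ∑ i, ∑ j, ∑ k, ∑ l, A i j k l * (δ j k * g i l) = ∑ k, ∑ l, (∑ i, A i i k l) * g k l :=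
  (hA.sum_mul_swap₁₂ fun i j k l => δ j k * g i l).trans (hA.sum_mul_delta₁₃ g)

lemma sum_mul_delta₂₄ (hA : IsSymmTensor₄ A) (g : ι → ι → ℝ) :
    ∑ i, ∑ j, ∑ k, ∑ l, A i j k l * (δ j l * g i k) = ∑ k, ∑ l, (∑ i, A i i k l) * g k l :=
  (hA.sum_mul_swap₃₄ fun i j k l => δ j l * g i k).trans (hA.sum_mul_delta₂₃ g)

lemma sum_mul_delta₃₄ (hA : IsSymmTensor₄ A) (g : ι → ι → ℝ) :
    ∑ i, ∑ j, ∑ k, ∑ l, A i j k l * (δ k l * g i j) = ∑ k, ∑ l, (∑ i, A i i k l) * g k l :=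
  (hA.sum_mul_swap₂₃ fun i j k l => δ k l * g i j).trans (hA.sum_mul_delta₂₄ g)

lemma sum_mul_harmonicTensor₄ (hA : IsSymmTensor₄ A) (x : EuclideanSpace ℝ ι) :
    ∑ i, ∑ j, ∑ k, ∑ l, A i j k l * harmonicTensor₄ x i j k l =
      ∑ i, ∑ j, ∑ k, ∑ l, A i j k l * (x i * x j * x k * x l)
        - 6 * ‖x‖ ^ 2 / (Fintype.card ι + 4) * ∑ k, ∑ l, (∑ i, A i i k l) * (x k * x l)
        + 3 * ‖x‖ ^ 4 / ((Fintype.card ι + 2) * (Fintype.card ι + 4)) *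
          ∑ k, ∑ l, (∑ i, A i i k l) * δ k l := by
  simp only [harmonicTensor₄, mul_add, mul_sub, mul_left_comm (A _ _ _ _) (_ / _),
    sum_add_distrib, sum_sub_distrib, ← mul_sum, sum_mul_delta₁₂, hA.sum_mul_delta₁₃,
    hA.sum_mul_delta₁₄, hA.sum_mul_delta₂₃, hA.sum_mul_delta₂₄, hA.sum_mul_delta₃₄,
    sum_mul_delta₁₂ A δ, hA.sum_mul_delta₁₃ δ, hA.sum_mul_delta₁₄ δ]
  ring

end IsSymmTensor₄

lemma sum_harmonicTensor₂_mul_harmonicTensor₂ (x y : EuclideanSpace ℝ ι) :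
    ∑ i, ∑ j, harmonicTensor₂ x i j * harmonicTensor₂ y i j =
      ⟪x, y⟫ ^ 2 - ‖x‖ ^ 2 * ‖y‖ ^ 2 / Fintype.card ι := by
  have inner_sq : ∑ i, ∑ j, x i * x j * (y i * y j) = ⟪x, y⟫ ^ 2 := by
    rw [inner_eq_sum_mul, sq, sum_mul_sum]
    exact sum_congr rfl fun i _ => sum_congr rfl fun j _ => by ring
  have trace_eq (z : EuclideanSpace ℝ ι) : ∑ i, ∑ j, z i * z j * δ i j = ‖z‖ ^ 2 := by
    rw [← real_inner_self_eq_norm_sq, inner_eq_sum_mul]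
    simp [Matrix.one_apply]
  have delta_sq : ∑ i, ∑ j, δ i j * δ i j = Fintype.card ι := by simp [Matrix.one_apply]
  have expand (i j : ι) : harmonicTensor₂ x i j * harmonicTensor₂ y i j =
      x i * x j * (y i * y j) - ‖y‖ ^ 2 / Fintype.card ι * (x i * x j * δ i j)
        - ‖x‖ ^ 2 / Fintype.card ι * (y i * y j * δ i j)
        + ‖x‖ ^ 2 / Fintype.card ι * (‖y‖ ^ 2 / Fintype.card ι) * (δ i j * δ i j) := by
    rw [harmonicTensor₂, harmonicTensor₂]
    ring
  simp only [expand, sum_add_distrib, sum_sub_distrib, ← mul_sum, inner_sq, trace_eq, delta_sq]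
  field

lemma sum_tensorPow_mul_harmonicTensor₄ (x y : EuclideanSpace ℝ ι) :
    ∑ i, ∑ j, ∑ k, ∑ l, y i * y j * y k * y l * harmonicTensor₄ x i j k l =
      ⟪x, y⟫ ^ 4 - 6 / (Fintype.card ι + 4) * (‖x‖ ^ 2 * ‖y‖ ^ 2 * ⟪x, y⟫ ^ 2)
        + 3 / ((Fintype.card ι + 2) * (Fintype.card ι + 4)) * (‖x‖ ^ 4 * ‖y‖ ^ 4) := by
  have symm_y : IsSymmTensor₄ fun i j k l => y i * y j * y k * y l :=
    ⟨fun _ _ _ _ => by ring, fun _ _ _ _ => by ring, fun _ _ _ _ => by ring⟩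
  have norm_sq : ∑ i, y i * y i = ‖y‖ ^ 2 := by
    rw [← inner_eq_sum_mul, real_inner_self_eq_norm_sq]
  have trace_y (k l : ι) : ∑ i, y i * y i * y k * y l = ‖y‖ ^ 2 * y k * y l := by
    rw [← sum_mul, ← sum_mul, norm_sq]
  have quadratic_term :
      ∑ k, ∑ l, ‖y‖ ^ 2 * y k * y l * (x k * x l) = ‖y‖ ^ 2 * ⟪x, y⟫ ^ 2 := by
    rw [inner_eq_sum_mul, sq (∑ i, _), sum_mul_sum]
    simp only [mul_sum]
    exact sum_congr rfl fun k _ => sum_congr rfl fun l _ => by ring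
  have quartic_term :
      ∑ i, ∑ j, ∑ k, ∑ l, y i * y j * y k * y l * (x i * x j * x k * x l) = ⟪x, y⟫ ^ 4 :=
    calc
      _ = ∑ i, ∑ j, ∑ k, ∑ l, x i * y i * (x j * y j) * (x k * y k) * (x l * y l) :=
        sum_congr rfl fun i _ => sum_congr rfl fun j _ => sum_congr rfl fun k _ =>
          sum_congr rfl fun l _ => by ring
      _ = ⟪x, y⟫ ^ 4 := by
        simp only [← mul_sum, ← sum_mul, ← inner_eq_sum_mul]
        ring
  have constant_term : ∑ k, ∑ l, ‖y‖ ^ 2 * y k * y l * δ k l = ‖y‖ ^ 4 := by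
    simp only [Matrix.one_apply, mul_ite, mul_one, mul_zero, sum_ite_eq, mem_univ, if_true,
      mul_assoc, ← mul_sum, norm_sq]
    ring
  rw [symm_y.sum_mul_harmonicTensor₄ x]
  simp only [trace_y, quadratic_term, quartic_term, constant_term]
  ring

lemma sum_harmonicTensor₄_mul_harmonicTensor₄ (x y : EuclideanSpace ℝ ι) :
    ∑ i, ∑ j, ∑ k, ∑ l, harmonicTensor₄ x i j k l * harmonicTensor₄ y i j k l =
      ⟪x, y⟫ ^ 4 - 6 / (Fintype.card ι + 4) * (‖x‖ ^ 2 * ‖y‖ ^ 2 * ⟪x, y⟫ ^ 2)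
        + 3 / ((Fintype.card ι + 2) * (Fintype.card ι + 4)) * (‖x‖ ^ 4 * ‖y‖ ^ 4) :=
  calc
    _ = ∑ i, ∑ j, ∑ k, ∑ l, harmonicTensor₄ x i j k l * (y i * y j * y k * y l) := by
      simp [(isSymmTensor₄_harmonicTensor₄ x).sum_mul_harmonicTensor₄ y, sum_harmonicTensor₄_self]
    _ = ∑ i, ∑ j, ∑ k, ∑ l, y i * y j * y k * y l * harmonicTensor₄ x i j k l := by
      simp only [mul_comm]
    _ = _ := sum_tensorPow_mul_harmonicTensor₄ x y

end HarmonicTensors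

section LevenshteinBound

variable {ι : Type*} [Fintype ι]

lemma sum_sum_inner_sq_sub_nonneg (Φ : Finset (EuclideanSpace ℝ ι)) :
    0 ≤ ∑ x ∈ Φ, ∑ y ∈ Φ, (⟪x, y⟫ ^ 2 - ‖x‖ ^ 2 * ‖y‖ ^ 2 / Fintype.card ι) := by
  classical
  refine sum_sum_nonneg_of_eq_sum_mul Φ (fun (p : ι × ι) x => harmonicTensor₂ x p.1 p.2)
    fun x y => ?_
  simp only [Fintype.sum_prod_type, sum_harmonicTensor₂_mul_harmonicTensor₂]

lemma sum_sum_inner_pow_four_sub_nonneg (Φ : Finset (EuclideanSpace ℝ ι)) :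
    0 ≤ ∑ x ∈ Φ, ∑ y ∈ Φ,
      (⟪x, y⟫ ^ 4 - 6 / (Fintype.card ι + 4) * (‖x‖ ^ 2 * ‖y‖ ^ 2 * ⟪x, y⟫ ^ 2)
        + 3 / ((Fintype.card ι + 2) * (Fintype.card ι + 4)) * (‖x‖ ^ 4 * ‖y‖ ^ 4)) := by
  classical
  refine sum_sum_nonneg_of_eq_sum_mul Φ
    (fun (p : ι × ι × ι × ι) x => harmonicTensor₄ x p.1 p.2.1 p.2.2.1 p.2.2.2) fun x y => ?_
  simp only [Fintype.sum_prod_type, sum_harmonicTensor₄_mul_harmonicTensor₄]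

lemma mul_card_le_of_sum_sum_nonneg {E : Type*} [NormedAddCommGroup E] [InnerProductSpace ℝ E]
    {Φ : Finset E} (hΦ : Φ.Nonempty) (hunit : ∀ x ∈ Φ, ‖x‖ = 1) {f : ℝ → ℝ} {c : ℝ}
    (hf : (Φ : Set E).Pairwise fun x y => f ⟪x, y⟫ ≤ 0)
    (hc : 0 ≤ ∑ x ∈ Φ, ∑ y ∈ Φ, (f ⟪x, y⟫ - c)) : c * #Φ ≤ f 1 := by
  classical
  have row_sum_le (x : E) (hx : x ∈ Φ) : ∑ y ∈ Φ, f ⟪x, y⟫ ≤ f 1 := by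
    have hself : ⟪x, x⟫ = 1 := by rw [real_inner_self_eq_norm_sq, hunit x hx, one_pow]
    rw [← add_sum_erase Φ _ hx, hself]
    have : ∑ y ∈ Φ.erase x, f ⟪x, y⟫ ≤ 0 := sum_nonpos fun y hy =>
      hf hx (mem_of_mem_erase hy) (ne_of_mem_erase hy).symm
    linarith
  have hcard : (0 : ℝ) < #Φ := by exact_mod_cast hΦ.card_pos
  refine le_of_mul_le_mul_left ?_ hcard
  calc
    #Φ * (c * #Φ) = ∑ _x ∈ Φ, ∑ _y ∈ Φ, c := by simp [mul_comm]
    _ ≤ ∑ x ∈ Φ, ∑ y ∈ Φ, f ⟪x, y⟫ := by simpa only [sum_sub_distrib, sub_nonneg] using hc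
    _ ≤ ∑ _x ∈ Φ, f 1 := sum_le_sum row_sum_le
    _ = #Φ * f 1 := by simp

variable [Nonempty ι] {Φ : Finset (EuclideanSpace ℝ ι)} {μ : ℝ}

lemma sum_sum_levenshtein_nonneg (hunit : ∀ x ∈ Φ, ‖x‖ = 1) {s : ℝ}
    (hs : s ≤ 6 / (Fintype.card ι + 4)) :
    0 ≤ ∑ x ∈ Φ, ∑ y ∈ Φ, (⟪x, y⟫ ^ 2 * (⟪x, y⟫ ^ 2 - s)
      - (3 / (Fintype.card ι + 2) - s) / Fintype.card ι) := by
  have hd : (Fintype.card ι : ℝ) ≠ 0 := by simp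
  have decomposition : ∑ x ∈ Φ, ∑ y ∈ Φ, (⟪x, y⟫ ^ 2 * (⟪x, y⟫ ^ 2 - s)
        - (3 / (Fintype.card ι + 2) - s) / Fintype.card ι) =
      ∑ x ∈ Φ, ∑ y ∈ Φ,
        (⟪x, y⟫ ^ 4 - 6 / (Fintype.card ι + 4) * (‖x‖ ^ 2 * ‖y‖ ^ 2 * ⟪x, y⟫ ^ 2)
          + 3 / ((Fintype.card ι + 2) * (Fintype.card ι + 4)) * (‖x‖ ^ 4 * ‖y‖ ^ 4))
      + (6 / (Fintype.card ι + 4) - s) *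
        ∑ x ∈ Φ, ∑ y ∈ Φ, (⟪x, y⟫ ^ 2 - ‖x‖ ^ 2 * ‖y‖ ^ 2 / Fintype.card ι) := by
    simp only [mul_sum, ← sum_add_distrib]
    refine sum_congr rfl fun x hx => sum_congr rfl fun y hy => ?_
    rw [hunit x hx, hunit y hy]
    field
  rw [decomposition]
  exact add_nonneg (sum_sum_inner_pow_four_sub_nonneg Φ)
    (mul_nonneg (sub_nonneg.2 hs) (sum_sum_inner_sq_sub_nonneg Φ))

theorem levenshtein_bound (hunit : ∀ x ∈ Φ, ‖x‖ = 1) (hcard : Fintype.card ι ≤ #Φ)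
    (hμ : (Φ : Set (EuclideanSpace ℝ ι)).Pairwise fun x y => |⟪x, y⟫| ≤ μ) :
    3 * #Φ - Fintype.card ι * (Fintype.card ι + 2) ≤
      (Fintype.card ι + 2) * (#Φ - Fintype.card ι) * μ ^ 2 := by
  have hd : (1 : ℝ) ≤ Fintype.card ι := by exact_mod_cast Fintype.card_pos
  have hdN : (Fintype.card ι : ℝ) ≤ #Φ := by exact_mod_cast hcard
  rcases le_or_gt (μ ^ 2) (6 / (Fintype.card ι + 4)) with hsmall | hlarge
  · have nonpos : (Φ : Set (EuclideanSpace ℝ ι)).Pairwise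
        fun x y => ⟪x, y⟫ ^ 2 * (⟪x, y⟫ ^ 2 - μ ^ 2) ≤ 0 := fun x hx y hy hxy =>
      mul_nonpos_of_nonneg_of_nonpos (sq_nonneg _)
        (sub_nonpos.2 (sq_le_sq.2 ((hμ hx hy hxy).trans (le_abs_self μ))))
    have lp := mul_card_le_of_sum_sum_nonneg (f := fun t => t ^ 2 * (t ^ 2 - μ ^ 2))
      (card_pos.1 (Fintype.card_pos.trans_le hcard)) hunit nonpos
      (sum_sum_levenshtein_nonneg hunit hsmall)
    field_simp at lp
    linarith
  · have three_le : 3 ≤ (Fintype.card ι + 2) * μ ^ 2 := by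
      rw [div_lt_iff₀ (by positivity)] at hlarge
      nlinarith
    calc
      3 * #Φ - Fintype.card ι * (Fintype.card ι + 2)
        ≤ 3 * (#Φ - Fintype.card ι : ℝ) := by nlinarith
      _ ≤ (Fintype.card ι + 2) * μ ^ 2 * (#Φ - Fintype.card ι) :=
        mul_le_mul_of_nonneg_right three_le (sub_nonneg.2 hdN)
      _ = (Fintype.card ι + 2) * (#Φ - Fintype.card ι) * μ ^ 2 := by ring

end LevenshteinBound

section Coherence

lemma abs_inner_le_coherence (Φ : Finset E3) :
    (Φ : Set E3).Pairwise fun x y => |⟪x, y⟫| ≤ coherence Φ := by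
  classical
  intro x hx y hy hxy
  have bddAbove : BddAbove {r : ℝ | ∃ x ∈ Φ, ∃ y ∈ Φ, x ≠ y ∧ r = |⟪x, y⟫|} := by
    refine ((Φ ×ˢ Φ).image fun p => |⟪p.1, p.2⟫|).bddAbove.mono ?_
    rintro r ⟨x, hx, y, hy, -, rfl⟩
    exact mem_coe.2 (mem_image.2 ⟨(x, y), mk_mem_product hx hy, rfl⟩)
  exact le_csSup bddAbove ⟨x, hx, y, hy, hxy, rfl⟩

lemma coherence_nonneg (Φ : Finset E3) : 0 ≤ coherence Φ := by
  refine Real.sSup_nonneg ?_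
  rintro r ⟨x, -, y, -, -, rfl⟩
  exact abs_nonneg _

lemma coherence_le {Φ : Finset E3} {c : ℝ} (hc : 0 ≤ c)
    (hΦ : (Φ : Set E3).Pairwise fun x y => |⟪x, y⟫| ≤ c) : coherence Φ ≤ c := by
  refine Real.sSup_le ?_ hc
  rintro r ⟨x, hx, y, hy, hxy, rfl⟩
  exact hΦ hx hy hxy

lemma muOpt_le_coherence {Φ : Finset E3} (hunit : ∀ x ∈ Φ, ‖x‖ = 1) :
    muOpt #Φ ≤ coherence Φ := by
  refine csInf_le ⟨0, ?_⟩ ⟨Φ, rfl, hunit, rfl⟩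
  rintro r ⟨Ψ, -, -, rfl⟩
  exact coherence_nonneg Ψ

lemma exists_finset_card_eq_of_norm_eq_one {E : Type*} [NormedAddCommGroup E] [NormedSpace ℝ E]
    (hE : 1 < Module.rank ℝ E) (n : ℕ) : ∃ Φ : Finset E, #Φ = n ∧ ∀ x ∈ Φ, ‖x‖ = 1 := by
  have : Nontrivial E := rank_pos_iff_nontrivial.1 (zero_lt_one.trans hE)
  obtain ⟨x, hx⟩ := exists_norm_eq E zero_le_one
  have : IsAddTorsionFree E := .of_isTorsionFree ℝ E
  have x_ne_neg : x ≠ -x := self_ne_neg.2 (norm_ne_zero_iff.1 (by simp [hx]))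
  have sphere_nontrivial : (Metric.sphere (0 : E) 1).Nontrivial :=
    ⟨x, by simpa using hx, -x, by simpa using hx, x_ne_neg⟩
  have sphere_infinite : (Metric.sphere (0 : E) 1).Infinite :=
    (isPreconnected_sphere hE 0 1).infinite_of_nontrivial sphere_nontrivial
  obtain ⟨Φ, hΦ, hcard⟩ := sphere_infinite.exists_subset_card_eq n
  exact ⟨Φ, hcard, fun x hx => mem_sphere_zero_iff_norm.1 (hΦ hx)⟩

lemma le_muOpt {n : ℕ} {c : ℝ}
    (hc : ∀ Φ : Finset E3, #Φ = n → (∀ x ∈ Φ, ‖x‖ = 1) → c ≤ coherence Φ) : c ≤ muOpt n := by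
  have one_lt_rank : 1 < Module.rank ℝ E3 := by
    rw [← Module.finrank_eq_rank, finrank_euclideanSpace_fin]
    norm_num
  obtain ⟨Φ, hcard, hunit⟩ := exists_finset_card_eq_of_norm_eq_one one_lt_rank n
  refine le_csInf ⟨_, Φ, hcard, hunit, rfl⟩ ?_
  rintro r ⟨Ψ, hcard, hunit, rfl⟩
  exact hc Ψ hcard hunit

theorem sqrt_levenshtein_le_muOpt {n : ℕ} (hn : 3 < n) :
    √(3 * (n - 5) / (5 * (n - 3))) ≤ muOpt n := by
  refine le_muOpt fun Φ hcard hunit => Real.sqrt_le_iff.2 ⟨coherence_nonneg Φ, ?_⟩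
  have bound := levenshtein_bound hunit (by simp [hcard, hn.le]) (abs_inner_le_coherence Φ)
  have hn' : (3 : ℝ) < n := by exact_mod_cast hn
  rw [hcard, Fintype.card_fin] at bound
  rw [div_le_iff₀ (by linarith)]
  push_cast at bound
  linarith

variable {κ : Type*} [Fintype κ]

lemma muOpt_card_le_of_norm_eq_one {u : κ → E3} (hu : ∀ i, ‖u i‖ = 1) {c : ℝ} (hc₀ : 0 ≤ c)
    (hc₁ : c < 1) (huc : Pairwise fun i j => |⟪u i, u j⟫| ≤ c) : muOpt (Fintype.card κ) ≤ c := by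
  have injective : Function.Injective u := fun i j hij => by
    by_contra hne
    have self_le := huc hne
    simp only [← hij, real_inner_self_eq_norm_sq, hu, one_pow, abs_one] at self_le
    linarith
  have pairwise : ((univ.map ⟨u, injective⟩ : Finset E3) : Set E3).Pairwise
      fun x y => |⟪x, y⟫| ≤ c := by
    simp only [coe_map, coe_univ, Set.image_univ, Function.Embedding.coeFn_mk]
    exact huc.range_pairwise
  calc
    muOpt (Fintype.card κ) = muOpt #(univ.map ⟨u, injective⟩) := by rw [card_map, card_univ]
    _ ≤ coherence (univ.map ⟨u, injective⟩) := muOpt_le_coherence (by simpa using hu)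
    _ ≤ c := coherence_le hc₀ pairwise

lemma muOpt_card_le {v : κ → E3} (hv : ∀ i, v i ≠ 0) {c : ℝ} (hc₀ : 0 ≤ c) (hc₁ : c < 1)
    (hvc : Pairwise fun i j => |⟪v i, v j⟫| ≤ c * (‖v i‖ * ‖v j‖)) :
    muOpt (Fintype.card κ) ≤ c := by
  refine muOpt_card_le_of_norm_eq_one (u := fun i => NormedSpace.normalize (v i))
    (fun i => NormedSpace.norm_normalize_eq_one_iff.2 (hv i)) hc₀ hc₁ fun i j hij => ?_
  have norm_mul_pos : 0 < ‖v i‖ * ‖v j‖ := mul_pos (norm_pos_iff.2 (hv i)) (norm_pos_iff.2 (hv j))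
  calc
    |⟪NormedSpace.normalize (v i), NormedSpace.normalize (v j)⟫|
      = |⟪v i, v j⟫| / (‖v i‖ * ‖v j‖) := by
        simp only [NormedSpace.normalize, real_inner_smul_left, real_inner_smul_right, abs_mul,
          abs_inv, abs_norm]
        field
    _ ≤ c := (div_le_iff₀ norm_mul_pos).2 (hvc hij)

lemma muOpt_card_le_of_int {w : κ → Fin 3 → ℤ} (hw : ∀ i, w i ≠ 0) {p q : ℕ} (hpq : p < q)
    (hwpq : Pairwise fun i j =>
      (q * (w i ⬝ᵥ w j)) ^ 2 ≤ p ^ 2 * ((w i ⬝ᵥ w i) * (w j ⬝ᵥ w j))) :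
    muOpt (Fintype.card κ) ≤ p / q := by
  let v (i : κ) : E3 := WithLp.toLp 2 fun a => (w i a : ℝ)
  have inner_v (i j : κ) : ⟪v i, v j⟫ = ((w i ⬝ᵥ w j : ℤ) : ℝ) := by
    simp [v, inner_eq_sum_mul, dotProduct]
  have hq : (0 : ℝ) < q := by exact_mod_cast hpq.pos
  have v_ne_zero (i : κ) : v i ≠ 0 := fun h =>
    hw i (funext fun a => by simpa [v] using congrArg (fun z : E3 => z a) h)
  refine muOpt_card_le v_ne_zero (by positivity)
    ((div_lt_one hq).2 (by exact_mod_cast hpq)) fun i j hij => ?_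
  refine abs_le_of_sq_le_sq ?_ (by positivity)
  have sq_le : (q * ⟪v i, v j⟫) ^ 2 ≤ p ^ 2 * (⟪v i, v i⟫ * ⟪v j, v j⟫) := by
    rw [inner_v, inner_v, inner_v]
    exact_mod_cast hwpq hij
  rw [real_inner_self_eq_norm_sq, real_inner_self_eq_norm_sq] at sq_le
  rw [div_mul_eq_mul_div, div_pow, le_div_iff₀ (by positivity)]
  linarith

/-- Integer vectors spanning a nearly optimal configuration of eight lines: a numerical minimizer
of the coherence, rotated so that the first vector is vertical and the second has no `y`-component,
then multiplied by `10 ^ 10` and rounded. -/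
def nearOptimalLines : Fin 8 → Fin 3 → ℤ :=
  ![![0, 0, 10000000000],
    ![7619898389, 0, 6475889787],
    ![-7606803417, -446534694, 6475889787],
    ![2995020166, 7006618704, 6475889787],
    ![-2579277346, -7170089249, 6475889787],
    ![-8652872010, 5009478881, 181458866],
    ![-1784834026, 9837755851, 181458866],
    ![8344440701, 5507938096, 181458866]]

lemma nearOptimalLines_ne_zero : ∀ i, nearOptimalLines i ≠ 0 := by
  decide

lemma nearOptimalLines_dotProduct_sq_le : Pairwise fun i j =>
    (1000000000 * (nearOptimalLines i ⬝ᵥ nearOptimalLines j)) ^ 2 ≤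
      647588979 ^ 2 * ((nearOptimalLines i ⬝ᵥ nearOptimalLines i) *
        (nearOptimalLines j ⬝ᵥ nearOptimalLines j)) := by
  unfold Pairwise
  decide

end Coherence

/-- The optimal coherence of eight lines satisfies 0.6 ≤ μ₈ ≤ 0.647588979. -/
theorem mu8_bounds : 0.6 ≤ muOpt 8 ∧ muOpt 8 ≤ 0.647588979 := by
  constructor
  · calc
      (0.6 : ℝ) = √(3 * ((8 : ℕ) - 5) / (5 * ((8 : ℕ) - 3))) := by
        rw [eq_comm, Real.sqrt_eq_iff_mul_self_eq_of_pos (by norm_num)]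
        norm_num
      _ ≤ muOpt 8 := sqrt_levenshtein_le_muOpt (by norm_num)
  · calc
      muOpt 8 = muOpt (Fintype.card (Fin 8)) := by rw [Fintype.card_fin]
      _ ≤ (647588979 : ℕ) / (1000000000 : ℕ) :=
        muOpt_card_le_of_int nearOptimalLines_ne_zero (by norm_num)
          nearOptimalLines_dotProduct_sq_le
      _ = 0.647588979 := by norm_num
end
end

section
/- Adjacent angles of a convex spherical rhombus: let 0 < ψ < π/2 and let x₁, x₂, x₃, x₄ be four distinct unit vectors in ℝ³ with d(x₁,x₂) = d(x₂,x₃) = d(x₃,x₄) = d(x₄,x₁) = ψ, and suppose there exist a unit vector m and reals s, t > 0 with x₁ + x₃ = s·m and x₂ + x₄ = t·m (convexity of the rhombus). Then the adjacent interior angles θ := ∠(x₂,x₁,x₄) and θ' := ∠(x₁,x₂,x₃) satisfy tan(θ/2)·tan(θ'/2) = sec(ψ). -/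
open scoped RealInnerProductSpace

noncomputable section

/-- Geodesic distance between unit vectors on the sphere. -/
def gdist (x y : E3) : ℝ := Real.arccos ⟪x, y⟫

/-- The minimum geodesic distance among distinct points of a finite set. -/
def psi (X : Finset E3) : ℝ :=
  sInf {r : ℝ | ∃ x ∈ X, ∃ y ∈ X, x ≠ y ∧ r = gdist x y}

/-- The unit tangent vector at `x` pointing toward `y`. -/
def tang (x y : E3) : E3 := ‖y - ⟪x, y⟫ • x‖⁻¹ • (y - ⟪x, y⟫ • x)

/-- The spherical angle `∠(y, x, z)` at the vertex `x` between `y` and `z`. -/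
def ang (y x z : E3) : ℝ := Real.arccos ⟪tang x y, tang x z⟫

/-!
Let `u`, `v` be the components of `x₂`, `x₄` orthogonal to `x₁`. They have equal norms, so
`tan (θ / 2) = ‖u - v‖ / ‖u + v‖`. Here `u - v = x₂ - x₄`, while `u + v` is `t` times the component
of `m` orthogonal to `x₁`. That component is as long as the component of `x₁` orthogonal to `m`,
which is `(x₁ - x₃) / 2` because `m` points to the midpoint of `x₁` and `x₃`. Hence
`tan (θ / 2) = 2 ‖x₂ - x₄‖ / (t ‖x₁ - x₃‖)`, and in the same way
`tan (θ' / 2) = 2 ‖x₁ - x₃‖ / (s ‖x₂ - x₄‖)`. The diagonals cancel in the product, and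
`4 / (s t) = sec ψ`.
-/

open InnerProductGeometry

section InnerProductSpace

variable {V : Type*} [NormedAddCommGroup V] [InnerProductSpace ℝ V]

/-- The component of `y` tangent at `x` to the unit sphere, that is, orthogonal to `x`, for a unit
vector `x`. It is not normalized. -/
def tangentPart (x y : V) : V := y - ⟪x, y⟫ • x

/-- The angle at the vertex `x` of the spherical triangle `y x z`, as the unoriented angle between
the tangent directions at `x`; it is `π / 2` if `y` or `z` is `±x`. -/
def sphericalAngle (y x z : V) : ℝ := angle (tangentPart x y) (tangentPart x z)

lemma tangentPart_add (x y z : V) : tangentPart x (y + z) = tangentPart x y + tangentPart x z := by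
  simp only [tangentPart, inner_add_right]
  module

lemma tangentPart_smul (x y : V) (r : ℝ) : tangentPart x (r • y) = r • tangentPart x y := by
  simp only [tangentPart, real_inner_smul_right]
  module

lemma tangentPart_sub_tangentPart {x y z : V} (h : ⟪x, y⟫ = ⟪x, z⟫) :
    tangentPart x y - tangentPart x z = y - z := by
  rw [tangentPart, tangentPart, h, sub_sub_sub_cancel_right]

lemma norm_tangentPart_sq (x y : V) :
    ‖tangentPart x y‖ ^ 2 = ‖y‖ ^ 2 - (2 - ‖x‖ ^ 2) * ⟪x, y⟫ ^ 2 := by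
  rw [tangentPart, norm_sub_sq_real, norm_smul, real_inner_smul_right, real_inner_comm, mul_pow,
    Real.norm_eq_abs, sq_abs]
  ring

lemma norm_tangentPart_congr {x y z : V} (hnorm : ‖y‖ = ‖z‖) (hinner : ⟪x, y⟫ = ⟪x, z⟫) :
    ‖tangentPart x y‖ = ‖tangentPart x z‖ := by
  rw [← sq_eq_sq₀ (norm_nonneg _) (norm_nonneg _), norm_tangentPart_sq, norm_tangentPart_sq,
    hnorm, hinner]

lemma norm_tangentPart_comm {x y : V} (h : ‖x‖ = ‖y‖) :
    ‖tangentPart x y‖ = ‖tangentPart y x‖ := by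
  rw [← sq_eq_sq₀ (norm_nonneg _) (norm_nonneg _), norm_tangentPart_sq, norm_tangentPart_sq,
    h, real_inner_comm]

lemma norm_add_eq_two_mul_cos_half_angle {u v : V} (h : ‖u‖ = ‖v‖) :
    ‖u + v‖ = 2 * ‖u‖ * Real.cos (angle u v / 2) := by
  have hcos : 0 ≤ Real.cos (angle u v / 2) :=
    Real.cos_nonneg_of_mem_Icc ⟨by linarith [angle_nonneg u v, Real.pi_pos],
      by linarith [angle_le_pi u v]⟩
  rw [← sq_eq_sq₀ (norm_nonneg _) (by positivity), norm_add_sq_real, mul_pow, Real.cos_sq,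
    mul_div_cancel₀ _ two_ne_zero, ← cos_angle_mul_norm_mul_norm, ← h]
  ring

lemma norm_sub_eq_two_mul_sin_half_angle {u v : V} (h : ‖u‖ = ‖v‖) :
    ‖u - v‖ = 2 * ‖u‖ * Real.sin (angle u v / 2) := by
  have hsin : 0 ≤ Real.sin (angle u v / 2) :=
    Real.sin_nonneg_of_nonneg_of_le_pi (by linarith [angle_nonneg u v])
      (by linarith [angle_le_pi u v, Real.pi_pos])
  rw [← sq_eq_sq₀ (norm_nonneg _) (by positivity), norm_sub_sq_real, mul_pow, Real.sin_sq,
    Real.cos_sq, mul_div_cancel₀ _ two_ne_zero, ← cos_angle_mul_norm_mul_norm, ← h]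
  ring

lemma tan_half_angle_of_norm_eq {u v : V} (h : ‖u‖ = ‖v‖) (hu : u ≠ 0) :
    Real.tan (angle u v / 2) = ‖u - v‖ / ‖u + v‖ := by
  rw [norm_sub_eq_two_mul_sin_half_angle h, norm_add_eq_two_mul_cos_half_angle h,
    mul_div_mul_left _ _ (mul_ne_zero two_ne_zero (norm_ne_zero_iff.mpr hu)),
    Real.tan_eq_sin_div_cos]

lemma tan_half_sphericalAngle_of_isosceles {x y z : V} (hnorm : ‖y‖ = ‖z‖)
    (hinner : ⟪x, y⟫ = ⟪x, z⟫) (hne : y ≠ z) :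
    Real.tan (sphericalAngle y x z / 2) = ‖y - z‖ / ‖tangentPart x (y + z)‖ := by
  have hsub := tangentPart_sub_tangentPart hinner
  have hnorm_tangent := norm_tangentPart_congr hnorm hinner
  have hy : tangentPart x y ≠ 0 := by
    intro hy
    have hz : tangentPart x z = 0 := by rw [← norm_eq_zero, ← hnorm_tangent, hy, norm_zero]
    rw [hy, hz, sub_zero] at hsub
    exact hne (sub_eq_zero.mp hsub.symm)
  rw [sphericalAngle, tan_half_angle_of_norm_eq hnorm_tangent hy, hsub, tangentPart_add]

lemma inner_eq_half_of_add_eq_smul {x y m : V} {s : ℝ} (hnorm : ‖x‖ = ‖y‖) (hm : ‖m‖ = 1)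
    (hs : s ≠ 0) (hadd : x + y = s • m) : ⟪m, x⟫ = s / 2 := by
  have hperp : ⟪m, x - y⟫ = 0 := by
    have h := (real_inner_add_sub_eq_zero_iff x y).mpr hnorm
    rw [hadd, real_inner_smul_left] at h
    exact (mul_eq_zero.mp h).resolve_left hs
  have hsum : ⟪m, x + y⟫ = s := by
    rw [hadd, real_inner_smul_right, real_inner_self_eq_norm_sq, hm, one_pow, mul_one]
  rw [inner_sub_right] at hperp
  rw [inner_add_right] at hsum
  linarith

lemma tangentPart_eq_half_sub_of_add_eq_smul {x y m : V} {s : ℝ} (hnorm : ‖x‖ = ‖y‖) (hm : ‖m‖ = 1)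
    (hs : s ≠ 0) (hadd : x + y = s • m) : tangentPart m x = (1 / 2 : ℝ) • (x - y) := by
  have hhalf : (s / 2) • m = (1 / 2 : ℝ) • (x + y) := by rw [hadd]; module
  rw [tangentPart, inner_eq_half_of_add_eq_smul hnorm hm hs hadd, hhalf]
  module

lemma tan_half_sphericalAngle_of_diagonals {x x' y y' m : V} {s t : ℝ}
    (hx : ‖x‖ = 1) (hx' : ‖x'‖ = 1) (hm : ‖m‖ = 1) (hs : s ≠ 0) (ht : 0 < t)
    (hxx' : x + x' = s • m) (hyy' : y + y' = t • m)
    (hnorm : ‖y‖ = ‖y'‖) (hinner : ⟪x, y⟫ = ⟪x, y'⟫) (hne : y ≠ y') :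
    Real.tan (sphericalAngle y x y' / 2) = 2 * ‖y - y'‖ / (t * ‖x - x'‖) := by
  have hsum : ‖tangentPart x (y + y')‖ = t * (1 / 2 * ‖x - x'‖) := by
    rw [hyy', tangentPart_smul, norm_smul_of_nonneg ht.le, norm_tangentPart_comm (hx.trans hm.symm),
      tangentPart_eq_half_sub_of_add_eq_smul (hx.trans hx'.symm) hm hs hxx',
      norm_smul_of_nonneg (by norm_num)]
  rw [tan_half_sphericalAngle_of_isosceles hnorm hinner hne, hsum]
  field_simp

lemma inner_add_inner_of_diagonals {x x' y y' m : V} {s t : ℝ} (hnorm : ‖x‖ = ‖x'‖)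
    (hm : ‖m‖ = 1) (hs : s ≠ 0) (hxx' : x + x' = s • m) (hyy' : y + y' = t • m) :
    ⟪x, y⟫ + ⟪x, y'⟫ = s * t / 2 := by
  rw [← inner_add_right, hyy', real_inner_smul_right, real_inner_comm,
    inner_eq_half_of_add_eq_smul hnorm hm hs hxx']
  ring

theorem rhombus_adjacent_angles_general {x₁ x₂ x₃ x₄ m : V} {s t ψ : ℝ}
    (h1 : ‖x₁‖ = 1) (h2 : ‖x₂‖ = 1) (h3 : ‖x₃‖ = 1) (h4 : ‖x₄‖ = 1)
    (hne13 : x₁ ≠ x₃) (hne24 : x₂ ≠ x₄) (h12 : angle x₁ x₂ = ψ) (h41 : angle x₄ x₁ = ψ)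
    (hm : ‖m‖ = 1) (hs : 0 < s) (ht : 0 < t)
    (hconv₁ : x₁ + x₃ = s • m) (hconv₂ : x₂ + x₄ = t • m) :
    Real.tan (sphericalAngle x₂ x₁ x₄ / 2) * Real.tan (sphericalAngle x₁ x₂ x₃ / 2) =
      (Real.cos ψ)⁻¹ := by
  have hnorm13 : ‖x₁‖ = ‖x₃‖ := h1.trans h3.symm
  have hnorm24 : ‖x₂‖ = ‖x₄‖ := h2.trans h4.symm
  have hinner12 : ⟪x₁, x₂⟫ = Real.cos ψ := by rw [inner_eq_cos_angle_of_norm_eq_one h1 h2, h12]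
  have hinner14 : ⟪x₁, x₄⟫ = Real.cos ψ := by
    rw [real_inner_comm, inner_eq_cos_angle_of_norm_eq_one h4 h1, h41]
  have hcos : Real.cos ψ = s * t / 4 := by
    linarith [inner_add_inner_of_diagonals hnorm13 hm hs.ne' hconv₁ hconv₂]
  have hinner23 : ⟪x₂, x₁⟫ = ⟪x₂, x₃⟫ := by
    linarith [inner_add_inner_of_diagonals hnorm24 hm ht.ne' hconv₂ hconv₁, real_inner_comm x₁ x₂]
  have hdiag13 : ‖x₁ - x₃‖ ≠ 0 := norm_sub_eq_zero_iff.not.mpr hne13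
  have hdiag24 : ‖x₂ - x₄‖ ≠ 0 := norm_sub_eq_zero_iff.not.mpr hne24
  rw [tan_half_sphericalAngle_of_diagonals h1 h3 hm hs.ne' ht hconv₁ hconv₂ hnorm24
      (hinner12.trans hinner14.symm) hne24,
    tan_half_sphericalAngle_of_diagonals h2 h4 hm ht.ne' hs hconv₂ hconv₁ hnorm13 hinner23 hne13,
    hcos]
  field_simp
  norm_num

end InnerProductSpace

lemma gdist_eq_angle {x y : E3} (hx : ‖x‖ = 1) (hy : ‖y‖ = 1) : gdist x y = angle x y := by
  rw [gdist, angle, hx, hy, mul_one, div_one]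

lemma ang_eq_sphericalAngle (y x z : E3) : ang y x z = sphericalAngle y x z := by
  rw [ang, sphericalAngle, angle, tang, tang, real_inner_smul_left, real_inner_smul_right]
  congr 1
  simp only [tangentPart]
  ring

/-- Adjacent interior angles θ, θ' of a convex spherical rhombus of side ψ satisfy
tan(θ/2)·tan(θ'/2) = sec ψ. -/
theorem rhombus_adjacent_angles {π : ℝ} (ψ : ℝ) (hψ0 : 0 < ψ) (hψ : ψ < π / 2)
    (x₁ x₂ x₃ x₄ : E3)
    (h1 : ‖x₁‖ = 1) (h2 : ‖x₂‖ = 1) (h3 : ‖x₃‖ = 1) (h4 : ‖x₄‖ = 1)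
    (hne12 : x₁ ≠ x₂) (hne13 : x₁ ≠ x₃) (hne14 : x₁ ≠ x₄)
    (hne23 : x₂ ≠ x₃) (hne24 : x₂ ≠ x₄) (hne34 : x₃ ≠ x₄)
    (h12 : gdist x₁ x₂ = ψ) (h23 : gdist x₂ x₃ = ψ)
    (h34 : gdist x₃ x₄ = ψ) (h41 : gdist x₄ x₁ = ψ)
    (m : E3) (hm : ‖m‖ = 1) (s t : ℝ) (hs : 0 < s) (ht : 0 < t)
    (hconv₁ : x₁ + x₃ = s • m) (hconv₂ : x₂ + x₄ = t • m) :
    Real.tan (ang x₂ x₁ x₄ / 2) * Real.tan (ang x₁ x₂ x₃ / 2) = (Real.cos ψ)⁻¹ := by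
  rw [gdist_eq_angle h1 h2] at h12
  rw [gdist_eq_angle h4 h1] at h41
  simpa only [ang_eq_sphericalAngle] using rhombus_adjacent_angles_general h1 h2 h3 h4 hne13 hne24
    h12 h41 hm hs ht hconv₁ hconv₂
end
end

section
/- Let 0 < ψ < π/2 and let x, x₁, x₂, x₃ be unit vectors in ℝ³ with ⟨x,x₁⟩ = ⟨x₁,x₂⟩ = ⟨x₂,x₃⟩ = cos(ψ) and ⟨x₃,x⟩ = −cos(ψ) (a path of four edges of geodesic length ψ from x to −x). Let α := ∠(x,x₁,x₂) and γ := ∠(x₂,x₃,−x). Then cos(α) + cos(γ) = −2·cot²(ψ). -/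
open scoped RealInnerProductSpace

noncomputable section

/-!
The diagonal from `x` to `x₂` cuts the path into two spherical triangles. The law of cosines
expresses `cos α` through `⟪x, x₂⟫` and `cos γ` through `⟪x₂, -x⟫ = -⟪x, x₂⟫`, with the same
coefficients since all four edges have length `ψ`, so the unknown diagonal cancels in the sum.
-/

section TangentialPart

variable {V : Type*} [NormedAddCommGroup V] [InnerProductSpace ℝ V] {x y : V}

theorem inner_sub_inner_smul_sub_inner_smul (hx : ‖x‖ = 1) (y z : V) :
    ⟪y - ⟪x, y⟫ • x, z - ⟪x, z⟫ • x⟫ = ⟪y, z⟫ - ⟪x, y⟫ * ⟪x, z⟫ := by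
  simp only [inner_sub_left, inner_sub_right, real_inner_smul_left, real_inner_smul_right,
    real_inner_self_eq_norm_sq, hx, real_inner_comm x y]
  ring

theorem norm_sub_inner_smul (hx : ‖x‖ = 1) (hy : ‖y‖ = 1) :
    ‖y - ⟪x, y⟫ • x‖ = √(1 - ⟪x, y⟫ ^ 2) := by
  rw [norm_eq_sqrt_real_inner, inner_sub_inner_smul_sub_inner_smul hx,
    real_inner_self_eq_norm_sq, hy, one_pow, sq]

end TangentialPart

section SphericalTriangle

variable {x y z : E3}

theorem ang_eq_angle (y x z : E3) :
    ang y x z = InnerProductGeometry.angle (y - ⟪x, y⟫ • x) (z - ⟪x, z⟫ • x) := by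
  rw [ang, tang, tang, InnerProductGeometry.angle, real_inner_smul_left, real_inner_smul_right,
    div_eq_mul_inv, mul_inv]
  ring_nf

theorem norm_sub_inner_smul_eq_sin_gdist (hx : ‖x‖ = 1) (hy : ‖y‖ = 1) :
    ‖y - ⟪x, y⟫ • x‖ = Real.sin (gdist x y) := by
  rw [norm_sub_inner_smul hx hy, gdist, Real.sin_arccos]

/-- The spherical law of cosines. It also covers `y = ±x` and `z = ±x`, where both sides are `0`:
the tangent vector is the junk value `0` on the left, the denominator vanishes on the right. -/
theorem cos_ang (hx : ‖x‖ = 1) (hy : ‖y‖ = 1) (hz : ‖z‖ = 1) :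
    Real.cos (ang y x z) =
      (⟪y, z⟫ - ⟪x, y⟫ * ⟪x, z⟫) / (Real.sin (gdist x y) * Real.sin (gdist x z)) := by
  rw [ang_eq_angle, InnerProductGeometry.cos_angle, inner_sub_inner_smul_sub_inner_smul hx,
    norm_sub_inner_smul_eq_sin_gdist hx hy, norm_sub_inner_smul_eq_sin_gdist hx hz]

theorem sin_gdist_of_inner_eq_cos {ψ : ℝ} (hxy : ⟪x, y⟫ = Real.cos ψ) :
    Real.sin (gdist x y) = |Real.sin ψ| := by
  rw [gdist, hxy, Real.sin_arccos, ← Real.abs_sin_eq_sqrt_one_sub_cos_sq]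

theorem cos_ang_of_inner_eq_cos {ψ : ℝ} (hx : ‖x‖ = 1) (hy : ‖y‖ = 1) (hz : ‖z‖ = 1)
    (hxy : ⟪x, y⟫ = Real.cos ψ) (hxz : ⟪x, z⟫ = Real.cos ψ) :
    Real.cos (ang y x z) = (⟪y, z⟫ - Real.cos ψ ^ 2) / Real.sin ψ ^ 2 := by
  rw [cos_ang hx hy hz, sin_gdist_of_inner_eq_cos hxy, sin_gdist_of_inner_eq_cos hxz, hxy, hxz,
    abs_mul_abs_self, sq, sq]

end SphericalTriangle

/-- Along a four-edge equilateral path from x to −x, the first and third interior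
angles α, γ satisfy cos α + cos γ = −2 cot² ψ. -/
theorem path_angles_sum {π : ℝ} (ψ : ℝ) (hψ0 : 0 < ψ) (hψ : ψ < π / 2)
    (x x₁ x₂ x₃ : E3)
    (hx : ‖x‖ = 1) (h1 : ‖x₁‖ = 1) (h2 : ‖x₂‖ = 1) (h3 : ‖x₃‖ = 1)
    (e1 : ⟪x, x₁⟫ = Real.cos ψ) (e2 : ⟪x₁, x₂⟫ = Real.cos ψ)
    (e3 : ⟪x₂, x₃⟫ = Real.cos ψ) (e4 : ⟪x₃, x⟫ = -Real.cos ψ) :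
    Real.cos (ang x x₁ x₂) + Real.cos (ang x₂ x₃ (-x)) =
      -2 * (Real.cos ψ / Real.sin ψ) ^ 2 := by
  have x₃_neg_x : ⟪x₃, -x⟫ = Real.cos ψ := by rw [inner_neg_right, e4, neg_neg]
  have diagonal : ⟪x₂, -x⟫ = -⟪x, x₂⟫ := by rw [inner_neg_right, real_inner_comm]
  have cos_α : Real.cos (ang x x₁ x₂) = (⟪x, x₂⟫ - Real.cos ψ ^ 2) / Real.sin ψ ^ 2 :=
    cos_ang_of_inner_eq_cos h1 hx h2 ((real_inner_comm _ _).trans e1) e2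
  have cos_γ : Real.cos (ang x₂ x₃ (-x)) = (-⟪x, x₂⟫ - Real.cos ψ ^ 2) / Real.sin ψ ^ 2 :=
    diagonal ▸ cos_ang_of_inner_eq_cos h3 h2 ((norm_neg x).trans hx)
      ((real_inner_comm _ _).trans e3) x₃_neg_x
  rw [cos_α, cos_γ]
  ring
end
end

section
/- Let 0 < ψ < π/2 and let x, x₁, x₂, x₃ be unit vectors in ℝ³ with ⟨x,x₁⟩ = ⟨x₁,x₂⟩ = ⟨x₂,x₃⟩ = cos(ψ) and ⟨x₃,x⟩ = −cos(ψ) (a path of four edges of geodesic length ψ from x to −x). Let β := ∠(x₁,x₂,x₃). Then cos(β) ≤ 1 − 2·cot²(ψ). -/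
open scoped RealInnerProductSpace

noncomputable section

/-!
Since `⟪x, x₁⟫ = cos ψ` and `⟪x, x₃⟫ = -cos ψ`, Cauchy–Schwarz for `x` and `x₁ - x₃` gives
`(2 cos ψ)² ≤ ‖x₁ - x₃‖² = 2 - 2 ⟪x₁, x₃⟫`, that is, `⟪x₁, x₃⟫ ≤ 1 - 2 cos² ψ`. The spherical law of
cosines at `x₂`, `cos β = (⟪x₁, x₃⟫ - cos² ψ) / sin² ψ`, turns this bound on the chord `x₁x₃` into
the bound on `cos β`.
-/

section InnerProductSpace

open InnerProductGeometry

variable {V : Type*} [NormedAddCommGroup V] [InnerProductSpace ℝ V]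

/-- The component of `y` orthogonal to the unit vector `x`: for a point `y` of the unit sphere, the
direction at `x` of the geodesic toward `y`, not normalized. -/
def tangentComponent (x y : V) : V := y - ⟪x, y⟫ • x

theorem inner_tangentComponent {x : V} (hx : ‖x‖ = 1) (y z : V) :
    ⟪tangentComponent x y, tangentComponent x z⟫ = ⟪y, z⟫ - ⟪x, y⟫ * ⟪x, z⟫ := by
  simp only [tangentComponent, inner_sub_left, inner_sub_right, real_inner_smul_left,
    real_inner_smul_right, real_inner_self_eq_norm_sq, hx, real_inner_comm x y]
  ring

theorem norm_tangentComponent {x y : V} {a : ℝ} (hx : ‖x‖ = 1) (hy : ‖y‖ = 1)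
    (hxy : ⟪x, y⟫ = Real.cos a) : ‖tangentComponent x y‖ = |Real.sin a| := by
  rw [norm_eq_sqrt_real_inner, inner_tangentComponent hx, real_inner_self_eq_norm_sq, hy, hxy,
    Real.abs_sin_eq_sqrt_one_sub_cos_sq, one_pow, sq]

theorem cos_angle_tangentComponent {x y z : V} {a b : ℝ} (hx : ‖x‖ = 1) (hy : ‖y‖ = 1)
    (hz : ‖z‖ = 1) (hxy : ⟪x, y⟫ = Real.cos a) (hxz : ⟪x, z⟫ = Real.cos b) :
    Real.cos (angle (tangentComponent x y) (tangentComponent x z)) =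
      (⟪y, z⟫ - Real.cos a * Real.cos b) / (|Real.sin a| * |Real.sin b|) := by
  rw [cos_angle, inner_tangentComponent hx, norm_tangentComponent hx hy hxy,
    norm_tangentComponent hx hz hxz, hxy, hxz]

theorem inner_le_one_sub_sq_inner_sub_inner_div_two {x y z : V} (hx : ‖x‖ = 1) (hy : ‖y‖ = 1)
    (hz : ‖z‖ = 1) : ⟪y, z⟫ ≤ 1 - (⟪x, y⟫ - ⟪x, z⟫) ^ 2 / 2 := by
  have sq_le_chord_sq : (⟪x, y⟫ - ⟪x, z⟫) ^ 2 ≤ 2 - 2 * ⟪y, z⟫ :=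
    calc (⟪x, y⟫ - ⟪x, z⟫) ^ 2 = |⟪x, y - z⟫| ^ 2 := by rw [inner_sub_right, sq_abs]
      _ ≤ (‖x‖ * ‖y - z‖) ^ 2 := by gcongr; exact abs_real_inner_le_norm x (y - z)
      _ = 2 - 2 * ⟪y, z⟫ := by rw [hx, one_mul, norm_sub_sq_real, hy, hz]; ring
  linarith

theorem path_angle_middle_general {ψ : ℝ} (hψ : Real.sin ψ ≠ 0) {x x₁ x₂ x₃ : V}
    (hx : ‖x‖ = 1) (h1 : ‖x₁‖ = 1) (h2 : ‖x₂‖ = 1) (h3 : ‖x₃‖ = 1)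
    (e1 : ⟪x, x₁⟫ = Real.cos ψ) (e2 : ⟪x₁, x₂⟫ = Real.cos ψ)
    (e3 : ⟪x₂, x₃⟫ = Real.cos ψ) (e4 : ⟪x₃, x⟫ = -Real.cos ψ) :
    Real.cos (angle (tangentComponent x₂ x₁) (tangentComponent x₂ x₃)) ≤
      1 - 2 * (Real.cos ψ / Real.sin ψ) ^ 2 := by
  rw [real_inner_comm] at e2 e4
  have inner_le : ⟪x₁, x₃⟫ ≤ 1 - 2 * Real.cos ψ ^ 2 :=
    calc ⟪x₁, x₃⟫ ≤ 1 - (⟪x, x₁⟫ - ⟪x, x₃⟫) ^ 2 / 2 :=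
          inner_le_one_sub_sq_inner_sub_inner_div_two hx h1 h3
      _ = 1 - 2 * Real.cos ψ ^ 2 := by rw [e1, e4]; ring
  calc Real.cos (angle (tangentComponent x₂ x₁) (tangentComponent x₂ x₃))
      = (⟪x₁, x₃⟫ - Real.cos ψ ^ 2) / Real.sin ψ ^ 2 := by
        rw [cos_angle_tangentComponent h2 h1 h3 e2 e3, abs_mul_abs_self, sq, sq]
    _ ≤ (Real.sin ψ ^ 2 - 2 * Real.cos ψ ^ 2) / Real.sin ψ ^ 2 := by
        gcongr ?_ / _
        linarith [Real.sin_sq_add_cos_sq ψ]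
    _ = 1 - 2 * (Real.cos ψ / Real.sin ψ) ^ 2 := by field_simp

end InnerProductSpace

theorem ang_eq_angle_tangentComponent (y x z : E3) :
    ang y x z = InnerProductGeometry.angle (tangentComponent x y) (tangentComponent x z) := by
  rw [ang, tang, tang, real_inner_smul_left, real_inner_smul_right, InnerProductGeometry.angle,
    tangentComponent, tangentComponent, ← mul_assoc, ← mul_inv, inv_mul_eq_div]

/-- Along a four-edge equilateral path from x to −x, the middle interior angle β
satisfies cos β ≤ 1 − 2 cot² ψ. -/
theorem path_angle_middle {π : ℝ} (ψ : ℝ) (hψ0 : 0 < ψ) (hψ : ψ < π / 2)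
    (x x₁ x₂ x₃ : E3)
    (hx : ‖x‖ = 1) (h1 : ‖x₁‖ = 1) (h2 : ‖x₂‖ = 1) (h3 : ‖x₃‖ = 1)
    (e1 : ⟪x, x₁⟫ = Real.cos ψ) (e2 : ⟪x₁, x₂⟫ = Real.cos ψ)
    (e3 : ⟪x₂, x₃⟫ = Real.cos ψ) (e4 : ⟪x₃, x⟫ = -Real.cos ψ) :
    Real.cos (ang x₁ x₂ x₃) ≤ 1 - 2 * (Real.cos ψ / Real.sin ψ) ^ 2 := by
  -- `π` is an arbitrary real here, so `sin ψ` may vanish; the quotient is then `0`.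
  by_cases hsin : Real.sin ψ = 0
  · simpa [hsin] using Real.cos_le_one (ang x₁ x₂ x₃)
  · rw [ang_eq_angle_tangentComponent]
    exact path_angle_middle_general hsin hx h1 h2 h3 e1 e2 e3 e4
end
end

section
/- Existence of an equilibrium stress (KKT conditions): let n ≥ 2 and let X = {x₁,…,x₂ₙ} be an antipodal set of 2n distinct unit vectors in ℝ³ (with x_{i+n} = −x_i for 1 ≤ i ≤ n) that is optimal, i.e., ψ(Y) ≤ ψ(X) for every antipodal set Y of 2n distinct unit vectors. For each i let J(i) := { j : d(x_i,x_j) = ψ(X) }. Then there exist real coefficients ω_{ij} = ω_{ji} for 1 ≤ i,j ≤ 2n, i ≠ j, such that: (i) ω_{ij} ≥ 0 for all i ≠ j; (ii) ω_{ij} = 0 whenever j ∉ J(i); (iii) the sum of all ω_{ij} over i ≠ j equals 1; and (iv) for each i, the sum over j ∈ J(i) of ω_{ij}·v_{x_i x_j} equals the zero vector. -/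
open scoped RealInnerProductSpace

noncomputable section

/-!
Let `X` be optimal and call a pair of points of `X` at distance `ψ(X)` a contact. Moving every point
`x` along a vector field `u` changes the distance of a contact `{x, y}` at the rate
`-(⟪u x, v_xy⟫ + ⟪u y, v_yx⟫)`. By Gordan's alternative, either some convex combination of these
linear forms in `u` vanishes, and its symmetrized weights are the equilibrium stress, or some `u`
lengthens every contact to first order. In the second case the odd part of `u` does so as well,
because the contacts are invariant under `x ↦ -x`; displacing `X` a little along it and projecting
back to the sphere gives an antipodal set with larger `ψ`, contradicting optimality.
-/

open Filter Topology NormedSpace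

section Gordan

variable {E κ : Type*} [NormedAddCommGroup E] [InnerProductSpace ℝ E]

-- The witness is the point of `K` nearest to the origin.
theorem exists_forall_inner_pos_of_zero_notMem {K : Set E} (hcomplete : IsComplete K)
    (hconvex : Convex ℝ K) (hzero : (0 : E) ∉ K) : ∃ v : E, ∀ w ∈ K, 0 < ⟪v, w⟫ := by
  rcases K.eq_empty_or_nonempty with rfl | hne
  · exact ⟨0, fun _ hw => hw.elim⟩
  obtain ⟨v, hvK, hmin⟩ := exists_norm_eq_iInf_of_complete_convex hne hcomplete hconvex 0
  refine ⟨v, fun w hw => ?_⟩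
  have hvar : ⟪0 - v, w - v⟫ ≤ 0 :=
    (norm_eq_iInf_iff_real_inner_le_zero hconvex hvK).1 hmin w hw
  have hpos : 0 < ⟪v, v⟫ := real_inner_self_pos.2 fun hv => hzero (hv ▸ hvK)
  rw [zero_sub, inner_neg_left, inner_sub_right] at hvar
  linarith

theorem exists_mem_stdSimplex_sum_smul_eq_zero_or_exists_inner_neg [Fintype κ] (a : κ → E) :
    (∃ w ∈ stdSimplex ℝ κ, ∑ i, w i • a i = 0) ∨ ∃ u : E, ∀ i, ⟪u, a i⟫ < 0 := by
  classical
  let L : (κ → ℝ) →ₗ[ℝ] E := Fintype.linearCombination ℝ a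
  by_cases hzero : (0 : E) ∈ L '' stdSimplex ℝ κ
  · obtain ⟨w, hw, hLw⟩ := hzero
    exact .inl ⟨w, hw, hLw⟩
  · have hcompact : IsCompact (L '' stdSimplex ℝ κ) :=
      (isCompact_stdSimplex ℝ κ).image L.continuous_of_finiteDimensional
    obtain ⟨v, hv⟩ := exists_forall_inner_pos_of_zero_notMem hcompact.isComplete
      ((convex_stdSimplex ℝ κ).linear_image L) hzero
    refine .inr ⟨-v, fun i => ?_⟩
    have hvertex : a i ∈ L '' stdSimplex ℝ κ :=
      ⟨Pi.single i 1, single_mem_stdSimplex ℝ i, by simp [L]⟩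
    simpa using hv (a i) hvertex

theorem exists_weights_sum_smul_eq_zero_or_exists_inner_neg (P : Finset κ) (a : κ → E) :
    (∃ w : κ → ℝ, (∀ i, 0 ≤ w i) ∧ (∀ i ∉ P, w i = 0) ∧ ∑ i ∈ P, w i = 1 ∧
      ∑ i ∈ P, w i • a i = 0) ∨ ∃ u : E, ∀ i ∈ P, ⟪u, a i⟫ < 0 := by
  classical
  rcases exists_mem_stdSimplex_sum_smul_eq_zero_or_exists_inner_neg (fun i : P => a i) with
    ⟨w, ⟨hnonneg, hsum⟩, hzero⟩ | ⟨u, hu⟩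
  · left
    refine ⟨fun i => if h : i ∈ P then w ⟨i, h⟩ else 0, fun i => ?_, fun i hi => dif_neg hi,
      ?_, ?_⟩
    · dsimp only
      split_ifs
      exacts [hnonneg _, le_rfl]
    · simpa [← Finset.sum_coe_sort P] using hsum
    · simpa [← Finset.sum_coe_sort P] using hzero
  · exact .inr ⟨u, fun i hi => hu ⟨i, hi⟩⟩

end Gordan

section Stress

variable {ι V : Type*} [NormedAddCommGroup V] [InnerProductSpace ℝ V]

/-- `ω` is an equilibrium stress on the points of `X`: symmetric nonnegative weights of total mass
one, carried by the pairs related by `r`, that balance at each point `i` the forces `f i j` exerted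
on `i` by the points `j`. -/
structure IsEquilibriumStress (X : Finset ι) (r : ι → ι → Prop) (f : ι → ι → V)
    (ω : ι → ι → ℝ) : Prop where
  symm : ∀ i j, ω i j = ω j i
  nonneg : ∀ i j, 0 ≤ ω i j
  eq_zero : ∀ i j, ¬(i ∈ X ∧ j ∈ X ∧ r i j) → ω i j = 0
  sum_eq_one : ∑ i ∈ X, ∑ j ∈ X, ω i j = 1
  equilibrium : ∀ i ∈ X, ∑ j ∈ X, ω i j • f i j = 0

/-- The force that the pair `p` exerts on the whole configuration `X`: its component at `p.1` is
`f p.1 p.2`, its component at `p.2` is `f p.2 p.1`, and the others vanish. Equilibrium of a stress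
is the vanishing of a linear combination of these vectors. -/
def pairForce [DecidableEq ι] (X : Finset ι) (f : ι → ι → V) (p : ι × ι) :
    PiLp 2 fun _ : X => V :=
  WithLp.toLp 2 fun k =>
    (if p.1 = k then f p.1 p.2 else 0) + if p.2 = k then f p.2 p.1 else 0

theorem inner_pairForce [DecidableEq ι] {X : Finset ι} (f : ι → ι → V)
    (U : PiLp 2 fun _ : X => V) (i j : X) :
    ⟪U, pairForce X f (i, j)⟫ = ⟪U i, f i j⟫ + ⟪U j, f j i⟫ := by
  simp [PiLp.inner_apply, pairForce, inner_add_right, Finset.sum_add_distrib,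
    apply_ite (inner ℝ _)]

theorem sum_smul_pairForce_apply [DecidableEq ι] {X : Finset ι} (f : ι → ι → V)
    (w : ι × ι → ℝ) (k : X) :
    (∑ p ∈ X ×ˢ X, w p • pairForce X f p) k = ∑ j ∈ X, (w (k, j) + w (j, k)) • f k j := by
  simp [pairForce, Finset.sum_product, Finset.sum_add_distrib, add_smul]

theorem isEquilibriumStress_symmetrize [DecidableEq ι] {X : Finset ι} {r : ι → ι → Prop}
    (hr : ∀ i j, r i j → r j i) {f : ι → ι → V} {w : ι × ι → ℝ} (hnonneg : ∀ p, 0 ≤ w p)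
    (hsupp : ∀ i j, ¬(i ∈ X ∧ j ∈ X ∧ r i j) → w (i, j) = 0)
    (hsum : ∑ p ∈ X ×ˢ X, w p = 1) (hzero : ∑ p ∈ X ×ˢ X, w p • pairForce X f p = 0) :
    IsEquilibriumStress X r f fun i j => (w (i, j) + w (j, i)) / 2 where
  symm i j := by rw [add_comm]
  nonneg i j := by linarith [hnonneg (i, j), hnonneg (j, i)]
  eq_zero i j hij := by
    have hji : ¬(j ∈ X ∧ i ∈ X ∧ r j i) := fun ⟨hj, hi, h⟩ => hij ⟨hi, hj, hr j i h⟩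
    simp [hsupp i j hij, hsupp j i hji]
  sum_eq_one := by
    rw [Finset.sum_product] at hsum
    simp only [← Finset.sum_div, Finset.sum_add_distrib]
    rw [Finset.sum_comm (f := fun i j => w (j, i)), hsum]
    norm_num
  equilibrium i hi := by
    have hcoord := sum_smul_pairForce_apply f w ⟨i, hi⟩
    rw [hzero, PiLp.zero_apply] at hcoord
    simp only [div_eq_inv_mul, mul_smul, ← Finset.smul_sum, ← hcoord, smul_zero]

theorem exists_isEquilibriumStress_or_exists_inner_add_inner_neg (X : Finset ι)
    {r : ι → ι → Prop} (hr : ∀ i j, r i j → r j i) (f : ι → ι → V) :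
    (∃ ω, IsEquilibriumStress X r f ω) ∨
      ∃ u : ι → V, ∀ i ∈ X, ∀ j ∈ X, r i j → ⟪u i, f i j⟫ + ⟪u j, f j i⟫ < 0 := by
  classical
  let P : Finset (ι × ι) := {p ∈ X ×ˢ X | r p.1 p.2}
  have mem_P {i j : ι} : (i, j) ∈ P ↔ i ∈ X ∧ j ∈ X ∧ r i j := by simp [P, and_assoc]
  rcases exists_weights_sum_smul_eq_zero_or_exists_inner_neg P (pairForce X f) with
    ⟨w, hnonneg, hsupp, hsum, hzero⟩ | ⟨U, hU⟩
  · have hP : P ⊆ X ×ˢ X := Finset.filter_subset _ _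
    rw [Finset.sum_subset hP fun p _ hp => hsupp p hp] at hsum
    rw [Finset.sum_subset hP fun p _ hp => by rw [hsupp p hp, zero_smul]] at hzero
    exact .inl ⟨_, isEquilibriumStress_symmetrize hr hnonneg
      (fun i j hij => hsupp _ (mem_P.not.2 hij)) hsum hzero⟩
  · refine .inr ⟨fun i => if h : i ∈ X then U ⟨i, h⟩ else 0, fun i hi j hj hij => ?_⟩
    have hneg := hU (i, j) (mem_P.2 ⟨hi, hj, hij⟩)
    rw [inner_pairForce f U ⟨i, hi⟩ ⟨j, hj⟩] at hneg
    simpa [hi, hj] using hneg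

end Stress

section Sphere

variable {V : Type*} [NormedAddCommGroup V] [InnerProductSpace ℝ V]

/-- The geodesic distance between two unit vectors of a real inner product space; on `E3` this is
`gdist`. -/
def geodesicDist (x y : V) : ℝ := Real.arccos ⟪x, y⟫

/-- The least geodesic distance between distinct points of `X`; on `E3` this is `psi`. Its value is
`0` if `X` has fewer than two points. -/
def minGeodesicDist (X : Finset V) : ℝ :=
  sInf {r : ℝ | ∃ x ∈ X, ∃ y ∈ X, x ≠ y ∧ r = geodesicDist x y}

/-- The unit tangent at the unit vector `x` toward `y`; on `E3` this is `tang`. Its value is `0` if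
`y = ±x`. -/
def unitTangent (x y : V) : V := normalize (y - ⟪x, y⟫ • x)

/-- The contact relation of `X`: distinct vectors realizing the least geodesic distance. Membership
in `X` is not part of it. -/
def IsContact (X : Finset V) (x y : V) : Prop :=
  x ≠ y ∧ geodesicDist x y = minGeodesicDist X

/-- Moving the points of `X` along `u` lengthens every contact to first order: the
distance of `x` and `y` has derivative `-(⟪u x, unitTangent x y⟫ + ⟪u y, unitTangent y x⟫)`. -/
def IsFirstOrderExpanding (X : Finset V) (u : V → V) : Prop :=
  ∀ x ∈ X, ∀ y ∈ X, IsContact X x y →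
    ⟪u x, unitTangent x y⟫ + ⟪u y, unitTangent y x⟫ < 0

theorem geodesicDist_comm (x y : V) : geodesicDist x y = geodesicDist y x := by
  rw [geodesicDist, real_inner_comm, geodesicDist]

theorem geodesicDist_neg_neg (x y : V) : geodesicDist (-x) (-y) = geodesicDist x y := by
  rw [geodesicDist, inner_neg_neg, geodesicDist]

theorem geodesicDist_self {x : V} (hx : ‖x‖ = 1) : geodesicDist x x = 0 := by
  rw [geodesicDist, real_inner_self_eq_norm_sq, hx, one_pow, Real.arccos_one]

theorem unitTangent_neg_neg (x y : V) : unitTangent (-x) (-y) = -unitTangent x y := by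
  rw [unitTangent, inner_neg_neg, smul_neg, ← neg_sub', normalize_neg, unitTangent]

theorem IsContact.symm {X : Finset V} {x y : V} (h : IsContact X x y) : IsContact X y x :=
  ⟨h.1.symm, (geodesicDist_comm y x).trans h.2⟩

theorem IsContact.neg_neg {X : Finset V} {x y : V} (h : IsContact X x y) :
    IsContact X (-x) (-y) :=
  ⟨neg_injective.ne h.1, (geodesicDist_neg_neg x y).trans h.2⟩

theorem finite_setOf_geodesicDist (X : Finset V) :
    {r : ℝ | ∃ x ∈ X, ∃ y ∈ X, x ≠ y ∧ r = geodesicDist x y}.Finite := by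
  refine ((X ×ˢ X).finite_toSet.image fun p => geodesicDist p.1 p.2).subset ?_
  rintro r ⟨x, hx, y, hy, -, rfl⟩
  exact ⟨(x, y), by simp [hx, hy], rfl⟩

theorem minGeodesicDist_le {X : Finset V} {x y : V} (hx : x ∈ X) (hy : y ∈ X) (hxy : x ≠ y) :
    minGeodesicDist X ≤ geodesicDist x y :=
  csInf_le (finite_setOf_geodesicDist X).bddBelow ⟨x, hx, y, hy, hxy, rfl⟩

theorem lt_minGeodesicDist {X : Finset V} (hX : X.Nontrivial) {m : ℝ}
    (hm : ∀ x ∈ X, ∀ y ∈ X, x ≠ y → m < geodesicDist x y) : m < minGeodesicDist X := by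
  obtain ⟨x, hx, y, hy, hxy⟩ := hX
  refine ((finite_setOf_geodesicDist X).lt_csInf_iff ⟨_, x, hx, y, hy, hxy, rfl⟩).2 ?_
  rintro _ ⟨a, ha, b, hb, hab, rfl⟩
  exact hm a ha b hb hab

theorem minGeodesicDist_nonneg (X : Finset V) : 0 ≤ minGeodesicDist X := by
  refine Real.sInf_nonneg ?_
  rintro _ ⟨x, -, y, -, -, rfl⟩
  exact Real.arccos_nonneg _

theorem norm_sub_inner_smul_comm {x y : V} (hxy : ‖x‖ = ‖y‖) :
    ‖y - ⟪x, y⟫ • x‖ = ‖x - ⟪y, x⟫ • y‖ := by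
  rw [← sq_eq_sq₀ (norm_nonneg _) (norm_nonneg _), norm_sub_sq_real, norm_sub_sq_real]
  simp only [inner_smul_right, norm_smul, real_inner_comm x y, hxy]

theorem inner_unitTangent_add_inner_unitTangent {x y : V} (hxy : ‖x‖ = ‖y‖) (u v : V) :
    ⟪u, unitTangent x y⟫ + ⟪v, unitTangent y x⟫ =
      ‖y - ⟪x, y⟫ • x‖⁻¹ * (⟪u, y - ⟪x, y⟫ • x⟫ + ⟪v, x - ⟪y, x⟫ • y⟫) := by
  rw [unitTangent, unitTangent, NormedSpace.normalize, NormedSpace.normalize,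
    ← norm_sub_inner_smul_comm hxy, inner_smul_right, inner_smul_right, mul_add]

end Sphere

section Displacement

variable {V : Type*} [NormedAddCommGroup V] [InnerProductSpace ℝ V]

/-- The point reached from the unit vector `x` by moving along `u x` for time `t` and projecting
back to the unit sphere. -/
def displace (u : V → V) (t : ℝ) (x : V) : V := normalize (x + t • u x)

theorem displace_zero (u : V → V) {x : V} (hx : ‖x‖ = 1) : displace u 0 x = x := by
  rw [displace, zero_smul, add_zero, normalize_eq_self_of_norm_eq_one hx]

theorem displace_neg {u : V → V} (hodd : ∀ x, u (-x) = -u x) (t : ℝ) (x : V) :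
    displace u t (-x) = -displace u t x := by
  rw [displace, hodd, smul_neg, ← neg_add, normalize_neg, displace]

theorem hasDerivAt_displace (u : V → V) {x : V} (hx : ‖x‖ = 1) :
    HasDerivAt (fun t => displace u t x) (u x - ⟪x, u x⟫ • x) 0 := by
  have hline : HasDerivAt (fun t : ℝ => x + t • u x) (u x) 0 := by
    simpa using ((hasDerivAt_id (0 : ℝ)).smul_const (u x)).const_add x
  have hnorm : HasDerivAt (fun t : ℝ => ‖x + t • u x‖) ⟪x, u x⟫ 0 := by
    simpa [hx, Real.sqrt_sq] using hline.norm_sq.sqrt (by simp [hx])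
  refine ((hnorm.inv (by simp [hx])).smul hline).congr_deriv ?_
  simp [hx, sub_eq_add_neg]

theorem hasDerivAt_inner_displace (u : V → V) {x y : V} (hx : ‖x‖ = 1) (hy : ‖y‖ = 1) :
    HasDerivAt (fun t => ⟪displace u t x, displace u t y⟫)
      (⟪u x, y - ⟪x, y⟫ • x⟫ + ⟪u y, x - ⟪y, x⟫ • y⟫) 0 := by
  refine ((hasDerivAt_displace u hx).inner ℝ (hasDerivAt_displace u hy)).congr_deriv ?_
  simp only [displace_zero u hx, displace_zero u hy, inner_sub_left, inner_sub_right,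
    real_inner_smul_right, real_inner_comm]
  ring

theorem eventually_norm_displace (u : V → V) {x : V} (hx : ‖x‖ = 1) :
    ∀ᶠ t in 𝓝 0, ‖displace u t x‖ = 1 := by
  have hcont : ContinuousAt (fun t : ℝ => x + t • u x) 0 := by fun_prop
  have hne : x + (0 : ℝ) • u x ≠ 0 := by
    rw [zero_smul, add_zero, ← norm_ne_zero_iff, hx]
    exact one_ne_zero
  filter_upwards [hcont.eventually_ne hne] with t ht
  exact norm_normalize ht

theorem eventually_lt_of_hasDerivAt_neg {g : ℝ → ℝ} {g' a : ℝ} (hg : HasDerivAt g g' a)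
    (hneg : g' < 0) : ∀ᶠ t in 𝓝[>] a, g t < g a := by
  have hslope : ∀ᶠ t in 𝓝[>] a, slope g a t < 0 :=
    (hg.hasDerivWithinAt (s := Set.Ioi a)).limsup_slope_le' (lt_irrefl a) hneg
  filter_upwards [hslope, self_mem_nhdsWithin] with t ht hat
  rw [slope_def_field, div_lt_iff₀ (sub_pos.2 hat), zero_mul] at ht
  exact sub_neg.1 ht

theorem eventually_lt_geodesicDist_displace {u : V → V} {x y : V} (hx : ‖x‖ = 1)
    (hy : ‖y‖ = 1) (hneg : ⟪u x, unitTangent x y⟫ + ⟪u y, unitTangent y x⟫ < 0) :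
    ∀ᶠ t in 𝓝[>] 0, geodesicDist x y < geodesicDist (displace u t x) (displace u t y) := by
  rw [inner_unitTangent_add_inner_unitTangent (hx.trans hy.symm)] at hneg
  have hderiv := eventually_lt_of_hasDerivAt_neg (hasDerivAt_inner_displace u hx hy)
    (neg_of_mul_neg_right hneg (inv_nonneg.2 (norm_nonneg _)))
  filter_upwards [hderiv, (eventually_norm_displace u hx).filter_mono nhdsWithin_le_nhds,
    (eventually_norm_displace u hy).filter_mono nhdsWithin_le_nhds] with t hlt htx hty
  rw [displace_zero u hx, displace_zero u hy] at hlt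
  exact Real.arccos_lt_arccos (real_inner_mem_Icc_of_norm_eq_one htx hty).1 hlt
    (real_inner_mem_Icc_of_norm_eq_one hx hy).2

theorem continuousAt_geodesicDist_displace (u : V → V) {x y : V} (hx : ‖x‖ = 1)
    (hy : ‖y‖ = 1) :
    ContinuousAt (fun t => geodesicDist (displace u t x) (displace u t y)) 0 :=
  Real.continuous_arccos.continuousAt.comp (hasDerivAt_inner_displace u hx hy).continuousAt

theorem eventually_minGeodesicDist_lt_geodesicDist_displace {X : Finset V}
    (hunit : ∀ x ∈ X, ‖x‖ = 1) {u : V → V} (hexpand : IsFirstOrderExpanding X u) :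
    ∀ᶠ t in 𝓝[>] 0, ∀ x ∈ X, ∀ y ∈ X, x ≠ y →
      minGeodesicDist X < geodesicDist (displace u t x) (displace u t y) := by
  simp only [Finset.eventually_all, eventually_imp_distrib_left]
  intro x hx y hy hxy
  rcases (minGeodesicDist_le hx hy hxy).eq_or_lt with hcontact | hlt
  · rw [hcontact]
    exact eventually_lt_geodesicDist_displace (hunit x hx) (hunit y hy)
      (hexpand x hx y hy ⟨hxy, hcontact.symm⟩)
  · rw [← displace_zero u (hunit x hx), ← displace_zero u (hunit y hy)] at hlt
    exact ((continuousAt_geodesicDist_displace u (hunit x hx) (hunit y hy)).eventually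
      (lt_mem_nhds hlt)).filter_mono nhdsWithin_le_nhds

theorem IsFirstOrderExpanding.exists_minGeodesicDist_lt {X : Finset V} (hX : X.Nontrivial)
    (hunit : ∀ x ∈ X, ‖x‖ = 1) (hanti : ∀ x ∈ X, -x ∈ X) {u : V → V}
    (hodd : ∀ x, u (-x) = -u x) (hexpand : IsFirstOrderExpanding X u) :
    ∃ Y : Finset V, Y.card = X.card ∧ (∀ y ∈ Y, ‖y‖ = 1) ∧ (∀ y ∈ Y, -y ∈ Y) ∧
      minGeodesicDist X < minGeodesicDist Y := by
  classical
  have hnorm : ∀ᶠ t in 𝓝[>] 0, ∀ x ∈ X, ‖displace u t x‖ = 1 := by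
    rw [Finset.eventually_all]
    exact fun x hx => (eventually_norm_displace u (hunit x hx)).filter_mono nhdsWithin_le_nhds
  obtain ⟨t, hone, hfar⟩ :=
    (hnorm.and (eventually_minGeodesicDist_lt_geodesicDist_displace hunit hexpand)).exists
  have hinj : Set.InjOn (displace u t) X := by
    intro x hx y hy heq
    by_contra hxy
    have hpos := hfar x hx y hy hxy
    rw [heq, geodesicDist_self (hone y hy)] at hpos
    exact hpos.not_ge (minGeodesicDist_nonneg X)
  refine ⟨X.image (displace u t), Finset.card_image_of_injOn hinj, ?_, ?_,
    lt_minGeodesicDist ?_ ?_⟩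
  · simpa using hone
  · simp only [Finset.forall_mem_image, ← displace_neg hodd]
    exact fun x hx => Finset.mem_image_of_mem _ (hanti x hx)
  · simpa using hX.image_of_injOn hinj
  · simp only [Finset.forall_mem_image]
    exact fun x hx y hy hne => hfar x hx y hy (ne_of_apply_ne _ hne)

theorem IsFirstOrderExpanding.sub_comp_neg {X : Finset V} (hanti : ∀ x ∈ X, -x ∈ X) {u : V → V}
    (hexpand : IsFirstOrderExpanding X u) :
    IsFirstOrderExpanding X fun x => u x - u (-x) := by
  intro x hx y hy hcontact
  have hpair := hexpand x hx y hy hcontact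
  have hneg := hexpand (-x) (hanti x hx) (-y) (hanti y hy) hcontact.neg_neg
  simp only [unitTangent_neg_neg, inner_neg_right] at hneg
  simp only [inner_sub_left]
  linarith

theorem exists_equilibrium_stress_general {X : Finset V} (hX : 2 < X.card)
    (hunit : ∀ x ∈ X, ‖x‖ = 1) (hanti : ∀ x ∈ X, -x ∈ X)
    (hopt : ∀ Y : Finset V, Y.card = X.card → (∀ y ∈ Y, ‖y‖ = 1) → (∀ y ∈ Y, -y ∈ Y) →
      minGeodesicDist Y ≤ minGeodesicDist X) :
    ∃ ω : V → V → ℝ, IsEquilibriumStress X (IsContact X) unitTangent ω := by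
  refine (exists_isEquilibriumStress_or_exists_inner_add_inner_neg X
    (fun _ _ => IsContact.symm) unitTangent).resolve_right ?_
  rintro ⟨u, hexpand : IsFirstOrderExpanding X u⟩
  have hodd : ∀ x, u (-x) - u (- -x) = -(u x - u (-x)) := fun x => by rw [neg_neg, neg_sub]
  obtain ⟨Y, hcard, hYunit, hYanti, hlt⟩ := (hexpand.sub_comp_neg hanti).exists_minGeodesicDist_lt
    (Finset.one_lt_card_iff_nontrivial.1 (by lia)) hunit hanti hodd
  exact hlt.not_ge (hopt Y hcard hYunit hYanti)

end Displacement

/-- KKT conditions: every optimal antipodal 2n-packing admits an equilibrium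
stress matrix supported on the contact graph. -/
theorem exists_equilibrium_stress (n : ℕ) (hn : 2 ≤ n) (X : Finset E3)
    (hcard : X.card = 2 * n) (hu : ∀ x ∈ X, ‖x‖ = 1) (hanti : ∀ x ∈ X, -x ∈ X)
    (hopt : ∀ Y : Finset E3, Y.card = 2 * n → (∀ y ∈ Y, ‖y‖ = 1) →
      (∀ y ∈ Y, -y ∈ Y) → psi Y ≤ psi X) :
    ∃ ω : E3 → E3 → ℝ,
      (∀ x y, ω x y = ω y x) ∧
      (∀ x y, 0 ≤ ω x y) ∧
      (∀ x y, ¬(x ∈ X ∧ y ∈ X ∧ x ≠ y ∧ gdist x y = psi X) → ω x y = 0) ∧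
      (∑ x ∈ X, ∑ y ∈ X, ω x y) = 1 ∧
      (∀ x ∈ X, (∑ y ∈ X, ω x y • tang x y) = 0) := by
  obtain ⟨ω, hω⟩ := exists_equilibrium_stress_general (by lia) hu hanti fun Y hY =>
    hopt Y (hY.trans hcard)
  exact ⟨ω, hω.symm, hω.nonneg, hω.eq_zero, hω.sum_eq_one, hω.equilibrium⟩
end
end

section
/- Degree bound: let 0 < ψ < π/2 and let x be a unit vector in ℝ³. Then any set Y of unit vectors satisfying ⟨x,y⟩ = cos(ψ) for all y ∈ Y and ⟨y,y'⟩ ≤ cos(ψ) for all distinct y,y' ∈ Y has at most 5 elements. -/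
open scoped RealInnerProductSpace

noncomputable section

/-!
Project `Y` orthogonally onto the plane `xᗮ`, and write `c` for the common value of `⟪x, y⟫`. If `Y`
has two distinct points then `c ^ 2 < 1`, every projection has squared length `1 - c ^ 2`, and two
distinct ones have inner product at most `c - c ^ 2`, so the cosine of their angle is at most
`c / (1 + c) < 1 / 2`. The projections are thus plane vectors at pairwise angles greater than
`π / 3`, and six of them would need more than a full turn.
-/

section

open InnerProductGeometry Module Set
open scoped Real

theorem encard_le_of_pairwise_le_abs_sub {ι : Type*} {s : Set ι} {f : ι → ℝ} {a α : ℝ} {n : ℕ}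
    (hα : 0 < α) (hmaps : MapsTo f s (Ico a (a + n * α)))
    (hsep : s.Pairwise fun i j => α ≤ |f i - f j|) : s.encard ≤ n := by
  let cell : ι → ℤ := fun i => ⌊(f i - a) / α⌋
  have cell_mem : MapsTo cell s (Finset.Ico (0 : ℤ) n) := fun i hi => by
    obtain ⟨hlower, hupper⟩ := hmaps hi
    rw [Finset.coe_Ico]
    refine ⟨Int.floor_nonneg.2 (div_nonneg (sub_nonneg.2 hlower) hα.le), Int.floor_lt.2 ?_⟩
    rw [Int.cast_natCast, div_lt_iff₀ hα]
    linarith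
  have cell_injOn : InjOn cell s := fun i hi j hj hij => by
    by_contra hne
    have hlt := Int.abs_sub_lt_one_of_floor_eq_floor hij
    rw [← sub_div, sub_sub_sub_cancel_right, abs_div, abs_of_pos hα, div_lt_one hα] at hlt
    exact (hsep hi hj hne).not_gt hlt
  simpa only [encard_coe_eq_coe_finsetCard, Int.card_Ico, sub_zero, Int.toNat_natCast] using
    encard_le_encard_of_injOn cell_mem cell_injOn

theorem abs_toReal_coe_le_abs (t : ℝ) : |(t : Real.Angle).toReal| ≤ |t| := by
  by_cases ht : t ∈ Ioc (-π) π
  · rw [Real.Angle.toReal_coe_eq_self_iff_mem_Ioc.2 ht]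
  · have hπ : π ≤ |t| := by
      by_contra! hlt
      exact ht ⟨(abs_lt.1 hlt).1, (abs_lt.1 hlt).2.le⟩
    exact (Real.Angle.abs_toReal_le_pi _).trans hπ

section Plane

variable {V : Type*} [NormedAddCommGroup V] [InnerProductSpace ℝ V] [Fact (finrank ℝ V = 2)]

theorem angle_le_abs_oangle_toReal_sub (o : Orientation ℝ V (Fin 2)) {u v w : V}
    (hu : u ≠ 0) (hv : v ≠ 0) (hw : w ≠ 0) :
    angle v w ≤ |(o.oangle u v).toReal - (o.oangle u w).toReal| := by
  have hcoe : o.oangle w v = ((o.oangle u v).toReal - (o.oangle u w).toReal : ℝ) := by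
    rw [Real.Angle.coe_sub, Real.Angle.coe_toReal, Real.Angle.coe_toReal,
      o.oangle_sub_left hu hw hv]
  rw [angle_comm, o.angle_eq_abs_oangle_toReal hw hv, hcoe]
  exact abs_toReal_coe_le_abs _

theorem encard_le_of_pairwise_lt_angle {ι : Type*} {s : Set ι} {v : ι → V} {α : ℝ} {n : ℕ}
    (hα : 2 * π ≤ (n + 2) * α) (hv : ∀ i ∈ s, v i ≠ 0)
    (hsep : s.Pairwise fun i j => α < angle (v i) (v j)) : s.encard ≤ n + 1 := by
  obtain rfl | ⟨k, hk⟩ := s.eq_empty_or_nonempty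
  · simp
  have hα₀ : 0 < α := pos_of_mul_pos_right (Real.two_pi_pos.trans_le hα) (by positivity)
  have := FiniteDimensional.of_fact_finrank_eq_two (K := ℝ) (V := V)
  let o : Orientation ℝ V (Fin 2) := (finBasisOfFinrankEq ℝ V Fact.out).orientation
  -- Measuring from `-v k` puts the cut of the angle coordinate inside the gap around `v k`.
  let θ : ι → ℝ := fun i => (o.oangle (-v k) (v i)).toReal
  have hk₀ : -v k ≠ 0 := neg_ne_zero.2 (hv k hk)
  have θ_mem : MapsTo θ (s \ {k}) (Ico (α - π) (α - π + n * α)) := fun i ⟨hi, hik⟩ => by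
    have habs : |θ i| < π - α := by
      rw [← o.angle_eq_abs_oangle_toReal hk₀ (hv i hi), angle_neg_left]
      exact sub_lt_sub_left (hsep hk hi (Ne.symm hik)) π
    rw [abs_lt] at habs
    constructor <;> linarith
  have θ_sep : (s \ {k}).Pairwise fun i j => α ≤ |θ i - θ j| := fun i hi j hj hij =>
    (hsep hi.1 hj.1 hij).le.trans
      (angle_le_abs_oangle_toReal_sub o hk₀ (hv i hi.1) (hv j hj.1))
  rw [← encard_sdiff_singleton_add_one hk]
  gcongr
  exact encard_le_of_pairwise_le_abs_sub hα₀ θ_mem θ_sep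

end Plane

section OrthogonalProjection

variable {E : Type*} [NormedAddCommGroup E] [InnerProductSpace ℝ E] {x y z : E} {c : ℝ}

theorem inner_orthogonalProjectionOnto_orthogonal_singleton (hx : ‖x‖ = 1) (y z : E) :
    ⟪(ℝ ∙ x)ᗮ.orthogonalProjectionOnto y, (ℝ ∙ x)ᗮ.orthogonalProjectionOnto z⟫ =
      ⟪y, z⟫ - ⟪x, y⟫ * ⟪x, z⟫ := by
  rw [Submodule.inner_orthogonalProjectionOnto_eq_of_mem_left,
    Submodule.orthogonalProjectionOnto_orthogonal, inner_sub_left,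
    Submodule.starProjection_unit_singleton ℝ hx, real_inner_smul_left]

theorem norm_sq_orthogonalProjectionOnto_orthogonal_singleton (hx : ‖x‖ = 1) (y : E) :
    ‖(ℝ ∙ x)ᗮ.orthogonalProjectionOnto y‖ ^ 2 = ‖y‖ ^ 2 - ⟪x, y⟫ ^ 2 := by
  rw [← real_inner_self_eq_norm_sq, inner_orthogonalProjectionOnto_orthogonal_singleton hx,
    real_inner_self_eq_norm_sq, sq ⟪x, y⟫]

theorem sq_lt_one_of_inner_eq_of_ne (hx : ‖x‖ = 1) (hy : ‖y‖ = 1) (hz : ‖z‖ = 1)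
    (hxy : ⟪x, y⟫ = c) (hxz : ⟪x, z⟫ = c) (hyz : y ≠ z) : c ^ 2 < 1 := by
  have hc : |c| ≤ 1 := by simpa only [hxy, hx, hy, mul_one] using abs_real_inner_le_norm x y
  refine ((sq_le_one_iff_abs_le_one c).2 hc).lt_of_ne fun hc₁ => hyz ?_
  obtain rfl | rfl := sq_eq_one_iff.1 hc₁
  · rw [← (inner_eq_one_iff_of_norm_eq_one hx hy).1 hxy,
      ← (inner_eq_one_iff_of_norm_eq_one hx hz).1 hxz]
  · rw [← neg_inj, ← (inner_eq_neg_one_iff_of_norm_eq_one hx hy).1 hxy,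
      ← (inner_eq_neg_one_iff_of_norm_eq_one hx hz).1 hxz]

theorem pi_div_three_lt_angle_orthogonalProjectionOnto (hx : ‖x‖ = 1) (hy : ‖y‖ = 1)
    (hz : ‖z‖ = 1) (hxy : ⟪x, y⟫ = c) (hxz : ⟪x, z⟫ = c) (hyz : ⟪y, z⟫ ≤ c) (hc : c ^ 2 < 1) :
    π / 3 < angle ((ℝ ∙ x)ᗮ.orthogonalProjectionOnto y)
      ((ℝ ∙ x)ᗮ.orthogonalProjectionOnto z) := by
  have hnorm {w : E} (hw : ‖w‖ = 1) (hxw : ⟪x, w⟫ = c) :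
      ‖(ℝ ∙ x)ᗮ.orthogonalProjectionOnto w‖ = √(1 - c ^ 2) := by
    rw [← Real.sqrt_sq (norm_nonneg _), norm_sq_orthogonalProjectionOnto_orthogonal_singleton hx,
      hw, hxw, one_pow]
  have hcos : Real.cos (angle ((ℝ ∙ x)ᗮ.orthogonalProjectionOnto y)
      ((ℝ ∙ x)ᗮ.orthogonalProjectionOnto z)) < 1 / 2 := by
    rw [cos_angle, hnorm hy hxy, hnorm hz hxz, Real.mul_self_sqrt (sub_pos.2 hc).le,
      inner_orthogonalProjectionOnto_orthogonal_singleton hx, hxy, hxz, div_lt_iff₀ (sub_pos.2 hc)]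
    have hgap : 0 < (1 - c) ^ 2 := sq_pos_of_ne_zero (sub_ne_zero.2 (by rintro rfl; simp at hc))
    linarith
  by_contra! hle
  have hcos_ge := Real.cos_le_cos_of_nonneg_of_le_pi (angle_nonneg _ _)
    (by linarith [Real.pi_pos]) hle
  rw [Real.cos_pi_div_three] at hcos_ge
  exact hcos.not_ge hcos_ge

end OrthogonalProjection

theorem degree_le_five_general {E : Type*} [NormedAddCommGroup E] [InnerProductSpace ℝ E]
    [Fact (finrank ℝ E = 3)] {x : E} {c : ℝ} {Y : Set E} (hx : ‖x‖ = 1)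
    (hY : ∀ y ∈ Y, ‖y‖ = 1) (hxy : ∀ y ∈ Y, ⟪x, y⟫ = c)
    (hyy : Y.Pairwise fun y y' => ⟪y, y'⟫ ≤ c) : Y.encard ≤ 5 := by
  obtain hsub | ⟨y, hy, z, hz, hyz⟩ := Y.subsingleton_or_nontrivial
  · exact (encard_le_one_iff_subsingleton.2 hsub).trans (by norm_num)
  have hc : c ^ 2 < 1 :=
    sq_lt_one_of_inner_eq_of_ne hx (hY y hy) (hY z hz) (hxy y hy) (hxy z hz) hyz
  have : Fact (finrank ℝ (ℝ ∙ x)ᗮ = 2) :=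
    ⟨Submodule.finrank_orthogonal_span_singleton (n := 2) (norm_ne_zero_iff.1 (by simp [hx]))⟩
  have proj_ne_zero : ∀ w ∈ Y, (ℝ ∙ x)ᗮ.orthogonalProjectionOnto w ≠ 0 := fun w hw => by
    rw [← norm_ne_zero_iff, ← sq_pos_iff,
      norm_sq_orthogonalProjectionOnto_orthogonal_singleton hx, hY w hw, hxy w hw]
    linarith
  have proj_sep : Y.Pairwise fun v w => π / 3 < angle ((ℝ ∙ x)ᗮ.orthogonalProjectionOnto v)
      ((ℝ ∙ x)ᗮ.orthogonalProjectionOnto w) := fun v hv w hw hvw =>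
    pi_div_three_lt_angle_orthogonalProjectionOnto hx (hY v hv) (hY w hw) (hxy v hv) (hxy w hw)
      (hyy hv hw hvw) hc
  have hcard := encard_le_of_pairwise_lt_angle (n := 4) (by push_cast; linarith) proj_ne_zero
    proj_sep
  exact hcard.trans (by norm_num)

end

/-- Degree bound: at most 5 unit vectors can lie at geodesic distance exactly ψ
from a common unit vector while being pairwise at geodesic distance at least ψ,
when 0 < ψ < π/2. -/
theorem degree_le_five {π : ℝ} (ψ : ℝ) (hψ0 : 0 < ψ) (hψ : ψ < π / 2)
    (x : E3) (hx : ‖x‖ = 1) (Y : Finset E3) (hY : ∀ y ∈ Y, ‖y‖ = 1)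
    (hxy : ∀ y ∈ Y, ⟪x, y⟫ = Real.cos ψ)
    (hyy : ∀ y ∈ Y, ∀ y' ∈ Y, y ≠ y' → ⟪y, y'⟫ ≤ Real.cos ψ) :
    Y.card ≤ 5 := by
  have : Fact (Module.finrank ℝ E3 = 3) := ⟨finrank_euclideanSpace_fin⟩
  have hcard := degree_le_five_general (Y := (Y : Set E3)) hx hY hxy hyy
  rwa [Set.encard_coe_eq_coe_finsetCard, Nat.cast_le_ofNat] at hcard
end
end
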